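/- With the apparatus fixed, suppose in addition that J_{s+r,k}(X) > X^{λ−δ}. Then there exist a prime number p with M < p ≤ 2M, an integer h ∈ {0,1,2,3}, and a constant C depending at most on s, k, r, t, N, such that J_{s+r,k}(X) ≤ C·M^{2s+2sh/3}·K_{0,1+h}(X), where K_{0,1+h}(X) is formed with respect to this prime p. -/

import Mathlib

open Filter MeasureTheory Finset

attribute [local instance] Classical.propDecidable

noncomputable section

/-- Number of integral solutions of the Vinogradov system of degree k
in 2s variables from [1,X]. -/
def Jcount (s k : ℕ) (X : ℝ) : ℕ :=
  Set.ncard {xy : (Fin s → ℤ) × (Fin s → ℤ) |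
    (∀ i, 1 ≤ xy.1 i ∧ (xy.1 i : ℝ) ≤ X) ∧
    (∀ i, 1 ≤ xy.2 i ∧ (xy.2 i : ℝ) ≤ X) ∧
    ∀ j ∈ Finset.Icc 1 k, ∑ i, ((xy.1 i) ^ j - (xy.2 i) ^ j) = 0}

/-- e(z) = exp(2πiz). -/
def ec (z : ℝ) : ℂ := Complex.exp (2 * Real.pi * Complex.I * z)

/-- The unit box [0,1)^k. -/
def box (k : ℕ) : Set (Fin k → ℝ) := Set.univ.pi fun _ => Set.Ico (0:ℝ) 1

/-- The exponential sum f_c(α;ξ), over 1 ≤ x ≤ X with x ≡ ξ (mod p^c). -/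
def fexp (k p : ℕ) (X : ℝ) (c : ℕ) (ξ : ℤ) (α : Fin k → ℝ) : ℂ :=
  ∑ x ∈ (Finset.Icc (1:ℤ) ⌊X⌋).filter (fun x => Int.ModEq ((p:ℤ)^c) x ξ),
    ec (∑ j : Fin k, α j * (x:ℝ)^((j:ℕ)+1))

/-- The set Ξ_c^r(ξ): r-tuples in [1,p^{c+1}], congruent to ξ mod p^c,
pairwise distinct mod p^{c+1}. -/
def XiSet (p r c : ℕ) (ξ : ℤ) : Set (Fin r → ℤ) :=
  {v | (∀ i, 1 ≤ v i ∧ v i ≤ (p:ℤ)^(c+1)) ∧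
       (∀ i, Int.ModEq ((p:ℤ)^c) (v i) ξ) ∧
       Function.Injective fun i => ((v i : ZMod (p^(c+1))))}

/-- The conditioned exponential sum F_c(α;ξ). -/
def Fexp (k p r : ℕ) (X : ℝ) (c : ℕ) (ξ : ℤ) (α : Fin k → ℝ) : ℂ :=
  ∑ᶠ v ∈ XiSet p r c ξ, ∏ i, fexp k p X (c+1) (v i) α

/-- The mean value I_{a,b}(X;ξ,η). -/
def Iab (k p r s : ℕ) (X : ℝ) (a b : ℕ) (ξ η : ℤ) : ℝ :=
  ∫ α in box k, ‖Fexp k p r X a ξ α‖^2 * ‖fexp k p X b η α‖^(2*s)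

/-- The mean value K_{a,b}(X;ξ,η). -/
def Kab (k p r t : ℕ) (X : ℝ) (a b : ℕ) (ξ η : ℤ) : ℝ :=
  ∫ α in box k, ‖Fexp k p r X a ξ α‖^2 * ‖Fexp k p r X b η α‖^(2*t)

/-- I_{a,b}(X): the maximum of I_{a,b}(X;ξ,η) over admissible ξ, η. -/
def Imax (k p r s : ℕ) (X : ℝ) (a b : ℕ) : ℝ :=
  sSup {v : ℝ | ∃ ξ η : ℤ, 1 ≤ ξ ∧ ξ ≤ (p:ℤ)^a ∧ 1 ≤ η ∧ η ≤ (p:ℤ)^b ∧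
    ¬ Int.ModEq (p:ℤ) η ξ ∧ v = Iab k p r s X a b ξ η}

/-- The set Ξ(η) of members of Ξ_0^r(0) avoiding the class of η mod p. -/
def XiTilde (p r : ℕ) (η : ℤ) : Set (Fin r → ℤ) :=
  {v | v ∈ XiSet p r 0 0 ∧ ∀ i, ¬ Int.ModEq (p:ℤ) (v i) η}

/-- The pre-conditioned sum F(α;η). -/
def Ftilde (k p r : ℕ) (X : ℝ) (η : ℤ) (α : Fin k → ℝ) : ℂ :=
  ∑ᶠ v ∈ XiTilde p r η, ∏ i, fexp k p X 1 (v i) α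

/-- The mean value K̃_c(X;η). -/
def Ktilde (k p r t : ℕ) (X : ℝ) (c : ℕ) (η : ℤ) : ℝ :=
  ∫ α in box k, ‖Ftilde k p r X η α‖^2 * ‖Fexp k p r X c η α‖^(2*t)

/-- K_{a,b}(X): for a ≥ 1 the maximum of K_{a,b}(X;ξ,η) over admissible ξ, η;
for a = 0 the pre-congruencing quantity K_{0,b}(X) = max_η K̃_b(X;η). -/
def Kmax (k p r t : ℕ) (X : ℝ) (a b : ℕ) : ℝ :=
  if a = 0 then sSup {v : ℝ | ∃ η : ℤ, 1 ≤ η ∧ η ≤ (p:ℤ)^b ∧ v = Ktilde k p r t X b η}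
  else sSup {v : ℝ | ∃ ξ η : ℤ, 1 ≤ ξ ∧ ξ ≤ (p:ℤ)^a ∧ 1 ≤ η ∧ η ≤ (p:ℤ)^b ∧
    ¬ Int.ModEq (p:ℤ) η ξ ∧ v = Kab k p r t X a b ξ η}

/-- λ = limsup_{Y→∞} log J_{sr,k}(Y)/log Y. -/
def lamExp (k sr : ℕ) : ℝ :=
  Filter.limsup (fun Y : ℝ => Real.log ((Jcount sr k Y : ℝ)) / Real.log Y) Filter.atTop

/-- θ = (16t)^{-N-1}. -/
def thetaC (t N : ℕ) : ℝ := (16*(t:ℝ)) ^ (-((N:ℝ)+1))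

/-- δ = θ/(1000 N t^N). -/
def deltaC (t N : ℕ) : ℝ := thetaC t N / (1000 * (N:ℝ) * (t:ℝ)^N)

/-- M = X^θ. -/
def Mval (t N : ℕ) (X : ℝ) : ℝ := X ^ thetaC t N

/-- κ = r(t+1) - (1/2)(t+r-k)(t+r-k-1+(2r-2)/(t-1)). -/
def kappa (k r t : ℕ) : ℝ :=
  (r : ℝ) * ((t : ℝ) + 1) -
    (1/2) * ((t : ℝ) + r - k) * ((t : ℝ) + r - k - 1 + (2*(r:ℝ) - 2)/((t:ℝ) - 1))

/-- Λ = λ - 2(s+r) + κ, with s = rt. -/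
def LamC (k r t : ℕ) : ℝ := lamExp k (r*(t+1)) - 2*((r*(t+1) : ℕ) : ℝ) + kappa k r t

/-- The normalised mean value ⟦K_{a,b}(X)⟧ = K_{a,b}(X) (X/M^b)^{-2s} (X/M^a)^{κ-2r}. -/
def normK (k p r t N : ℕ) (X : ℝ) (a b : ℕ) : ℝ :=
  Kmax k p r t X a b * (X / (Mval t N X)^b) ^ (-(2*((r*t : ℕ):ℝ))) *
    (X / (Mval t N X)^a) ^ (kappa k r t - 2*(r:ℝ))

/-- μ = (1/2)(t+r-k)(t+r-k-1). -/
def muC (k r t : ℕ) : ℝ := (1/2) * ((t:ℝ)+r-k) * ((t:ℝ)+r-k-1)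

/-- ν = (1/2)(t+r-k)(k+r-t-1). -/
def nuC (k r t : ℕ) : ℝ := (1/2) * ((t:ℝ)+r-k) * ((k:ℝ)+r-t-1)

/-- The central binomial coefficient, bounded in terms of the number of primes in `(n, 2n]`. -/
theorem centralBinom_le_pow_card_primes (n : ℕ) (hn : 2 < n) :
    n.centralBinom ≤ (2 * n) ^ Nat.sqrt (2 * n) * 4 ^ (2 * n / 3) *
      (2 * n) ^ ((Finset.Ioc n (2 * n)).filter Nat.Prime).card := by
  have n_pos : 0 < n := by omega
  have n2_pos : 1 ≤ 2 * n := by omega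
  set f : ℕ → ℕ := fun x => x ^ n.centralBinom.factorization x with hf
  set S := (Finset.range (2 * n / 3 + 1)).filter Nat.Prime with hS
  set T := (Finset.Ioc n (2 * n)).filter Nat.Prime with hT
  have hfn : ∀ p, ¬ p.Prime → f p = 1 := fun p hp => by
    simp [hf, Nat.factorization_eq_zero_of_not_prime n.centralBinom hp]
  have hdisj : Disjoint S T := by
    rw [Finset.disjoint_left]
    intro a ha hb
    simp only [hS, hT, Finset.mem_filter, Finset.mem_range, Finset.mem_Ioc] at ha hb
    omega
  have hprod : n.centralBinom = (∏ p ∈ S, f p) * ∏ p ∈ T, f p := by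
    rw [← Finset.prod_union hdisj]
    refine (Eq.trans ?_ n.prod_pow_factorization_centralBinom).symm
    apply Finset.prod_subset
    · intro a ha
      simp only [hS, hT, Finset.mem_union, Finset.mem_filter, Finset.mem_range,
        Finset.mem_Ioc] at ha ⊢
      omega
    · intro x hx hx'
      simp only [hS, hT, Finset.mem_union, Finset.mem_filter, Finset.mem_range,
        Finset.mem_Ioc] at hx hx'
      by_cases hxp : x.Prime
      · have h1 : x ≤ n := by by_contra h; exact hx' (Or.inr ⟨⟨by omega, by omega⟩, hxp⟩)
        have h2 : 2 * n < 3 * x := by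
          by_contra h; exact hx' (Or.inl ⟨by omega, hxp⟩)
        show x ^ _ = 1
        rw [Nat.factorization_centralBinom_of_two_mul_self_lt_three_mul hn h1 h2, pow_zero]
      · exact hfn x hxp
  have hle : ∀ p, f p ≤ 2 * n := fun p => Nat.pow_factorization_choose_le (by omega)
  rw [hprod]
  refine Nat.mul_le_mul ?_ ?_
  · rw [← Finset.prod_filter_mul_prod_filter_not S (· ≤ Nat.sqrt (2 * n))]
    refine Nat.mul_le_mul ?_ ?_
    · refine (Finset.prod_le_prod' fun p _ => hle p).trans ?_
      rw [Finset.prod_const]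
      refine pow_right_mono₀ n2_pos ?_
      have : (Finset.Icc 1 (Nat.sqrt (2 * n))).card = Nat.sqrt (2 * n) := by simp
      refine (Finset.card_le_card fun x hx => ?_).trans this.le
      obtain ⟨h1, h2⟩ := Finset.mem_filter.1 hx
      exact Finset.mem_Icc.mpr ⟨(Finset.mem_filter.1 h1).2.one_lt.le, h2⟩
    · refine le_trans ?_ (primorial_le_four_pow (2 * n / 3))
      refine (Finset.prod_le_prod' fun p hp => (?_ : f p ≤ p)).trans ?_
      · obtain ⟨h1, h2⟩ := Finset.mem_filter.1 hp
        refine (pow_right_mono₀ (Finset.mem_filter.1 h1).2.one_lt.le ?_).trans (pow_one p).le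
        exact Nat.factorization_choose_le_one (Nat.sqrt_lt'.mp <| not_le.1 h2)
      · rw [primorial]
        refine Finset.prod_le_prod_of_subset_of_one_le' ?_ ?_
        · intro x hx
          have := Finset.filter_subset _ _ hx
          simpa [hS] using this
        · intro p hp _
          exact (Finset.mem_filter.1 hp).2.one_lt.le
  · exact (Finset.prod_le_prod' fun p _ => hle p).trans (by rw [Finset.prod_const])

/-- The number of primes in `(n, 2n]` tends to infinity with `n`. -/
theorem exists_le_card_primes_Ioc (L : ℕ) : ∃ n₀ : ℕ, ∀ n : ℕ, n₀ ≤ n →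
    L ≤ ((Finset.Ioc n (2 * n)).filter Nat.Prime).card := by
  have h1 : ∀ᶠ y : ℝ in atTop, Real.log y ≤ (1 / 24) * y := by
    have := Real.isLittleO_log_id_atTop.bound (show (0:ℝ) < 1 / 24 by norm_num)
    filter_upwards [this, eventually_ge_atTop (1:ℝ)] with y hy hy1
    simpa [abs_of_nonneg (Real.log_nonneg hy1), abs_of_nonneg (by linarith : (0:ℝ) ≤ y)] using hy
  have h2 : Tendsto (fun n : ℕ => Real.sqrt (2 * n)) atTop atTop := by
    refine Real.tendsto_sqrt_atTop.comp ?_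
    exact (tendsto_natCast_atTop_atTop).const_mul_atTop (by norm_num)
  have h3 := h2.eventually h1
  have h4 := h2.eventually (eventually_ge_atTop ((L:ℝ) + 1))
  obtain ⟨n₀, hn₀⟩ := eventually_atTop.1 (h3.and (h4.and (eventually_ge_atTop 5)))
  refine ⟨n₀, fun n hn => ?_⟩
  obtain ⟨ha, hb, hc⟩ := hn₀ n hn
  by_contra! hlt
  set c := ((Finset.Ioc n (2 * n)).filter Nat.Prime).card
  have hcb := centralBinom_le_pow_card_primes n (by omega)
  have hlow := Nat.four_pow_lt_mul_centralBinom n (by omega)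
  have hchain : 4 ^ n < (2 * n) ^ (Nat.sqrt (2 * n) + L + 1) * 4 ^ (2 * n / 3) := by
    calc 4 ^ n < n * n.centralBinom := hlow
      _ ≤ (2 * n) * ((2 * n) ^ Nat.sqrt (2 * n) * 4 ^ (2 * n / 3) * (2 * n) ^ L) := by
        refine Nat.mul_le_mul (by omega) (hcb.trans ?_)
        exact Nat.mul_le_mul_left _ (Nat.pow_le_pow_right (by omega) hlt.le)
      _ = _ := by ring
  have hR : (4:ℝ) ^ n < (2 * n : ℝ) ^ (Nat.sqrt (2 * n) + L + 1) * 4 ^ (2 * n / 3) := by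
    exact_mod_cast hchain
  have hn0 : (0:ℝ) < n := by exact_mod_cast (by omega : 0 < n)
  have hlog := Real.log_lt_log (by positivity) hR
  rw [Real.log_mul (by positivity) (by positivity), Real.log_pow, Real.log_pow, Real.log_pow] at hlog
  set y := Real.sqrt (2 * n) with hy
  have hyy : y * y = 2 * n := Real.mul_self_sqrt (by positivity)
  have hly : Real.log (2 * n : ℝ) = 2 * Real.log y := by
    rw [← hyy, Real.log_mul] <;> [ring; skip; skip] <;> · intro h; rw [h] at hyy; linarith
  have hs : ((Nat.sqrt (2 * n) + L + 1 : ℕ) : ℝ) ≤ 2 * y := by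
    have : ((Nat.sqrt (2 * n) : ℕ) : ℝ) ≤ y := by
      have := @Real.nat_sqrt_le_real_sqrt (2 * n)
      simpa [hy] using this
    push_cast; linarith
  have hd : ((2 * n / 3 : ℕ) : ℝ) ≤ 2 * n / 3 := by
    have := @Nat.cast_div_le ℝ _ _ _ (2 * n) 3
    push_cast at this; exact this
  have h4 : 1 ≤ Real.log 4 := by
    have : Real.log 4 = 2 * Real.log 2 := by
      rw [show (4:ℝ) = 2 ^ 2 by norm_num, Real.log_pow]; norm_num
    have := Real.log_two_gt_d9; linarith
  have hy1 : 1 ≤ y := by have : (0:ℝ) ≤ L := Nat.cast_nonneg _; linarith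
  have hl0 : 0 ≤ Real.log y := Real.log_nonneg hy1
  rw [hly] at hlog
  have e1 : ((Nat.sqrt (2 * n) + L + 1 : ℕ) : ℝ) * (2 * Real.log y) ≤ (2 * y) * (2 * ((1/24) * y)) := by
    gcongr
  have e2 : ((2 * n / 3 : ℕ) : ℝ) * Real.log 4 ≤ 2 * n / 3 * Real.log 4 := by gcongr
  nlinarith

section

variable {k : ℕ}

/-- The character `α ↦ e(α · n)`. -/
def chr (n : Fin k → ℤ) (α : Fin k → ℝ) : ℂ := ec (∑ j, α j * (n j : ℝ))

theorem ec_add (x y : ℝ) : ec (x + y) = ec x * ec y := by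
  simp only [ec, ← Complex.exp_add]
  congr 1
  push_cast
  ring

theorem ec_zero : ec 0 = 1 := by simp [ec]

theorem chr_zero (α : Fin k → ℝ) : chr (0 : Fin k → ℤ) α = 1 := by simp [chr, ec_zero]

theorem chr_add (m n : Fin k → ℤ) (α : Fin k → ℝ) : chr (m + n) α = chr m α * chr n α := by
  simp only [chr, ← ec_add, ← Finset.sum_add_distrib]
  congr 1
  refine Finset.sum_congr rfl fun j _ => ?_
  push_cast [Pi.add_apply]
  ring

theorem chr_sum {ι : Type*} (s : Finset ι) (n : ι → Fin k → ℤ) (α : Fin k → ℝ) :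
    chr (∑ i ∈ s, n i) α = ∏ i ∈ s, chr (n i) α := by
  induction s using Finset.induction_on with
  | empty => simp [chr_zero]
  | insert a s ha ih => rw [Finset.sum_insert ha, Finset.prod_insert ha, chr_add, ih]

theorem conj_ec (x : ℝ) : (starRingEnd ℂ) (ec x) = ec (-x) := by
  simp only [ec, ← Complex.exp_conj]
  congr 1
  simp [Complex.conj_ofNat]

theorem conj_chr (n : Fin k → ℤ) (α : Fin k → ℝ) :
    (starRingEnd ℂ) (chr n α) = chr (-n) α := by
  simp only [chr, conj_ec]
  congr 1
  simp

theorem continuous_chr (n : Fin k → ℤ) : Continuous (chr n) := by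
  unfold chr ec
  fun_prop

theorem integrableOn_box {E : Type*} [NormedAddCommGroup E] {f : (Fin k → ℝ) → E}
    (hf : Continuous f) : IntegrableOn f (box k) := by
  refine (hf.continuousOn.integrableOn_compact (isCompact_univ_pi (fun _ => isCompact_Icc
    (a := (0:ℝ)) (b := 1)))).mono_set ?_
  exact Set.pi_mono fun _ _ => Set.Ico_subset_Icc_self

theorem integral_ec_mul_int (n : ℤ) :
    ∫ x in Set.Ico (0:ℝ) 1, ec (x * n) = if n = 0 then 1 else 0 := by
  rw [integral_Ico_eq_integral_Ioc, ← intervalIntegral.integral_of_le zero_le_one]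
  by_cases hn : n = 0
  · simp [hn, ec_zero]
  · rw [if_neg hn]
    have hc : (2 * Real.pi * Complex.I * n : ℂ) ≠ 0 := by
      simp [hn, Real.pi_ne_zero]
    have : ∀ x : ℝ, ec (x * n) = Complex.exp ((2 * Real.pi * Complex.I * n) * x) := by
      intro x; simp only [ec]; congr 1; push_cast; ring
    simp_rw [this]
    rw [integral_exp_mul_complex hc]
    have h1 : Complex.exp ((2 * Real.pi * Complex.I * n) * (1:ℝ)) = 1 := by
      rw [Complex.exp_eq_one_iff]; exact ⟨n, by push_cast; ring⟩
    rw [h1]; simp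

theorem integral_chr (n : Fin k → ℤ) : ∫ α in box k, chr n α = if n = 0 then 1 else 0 := by
  have h : ∀ α : Fin k → ℝ, chr n α = ∏ j, ec (α j * n j) := by
    intro α
    have : ∀ s : Finset (Fin k), ec (∑ j ∈ s, α j * (n j : ℝ)) = ∏ j ∈ s, ec (α j * n j) := by
      intro s
      induction s using Finset.induction_on with
      | empty => simp [ec_zero]
      | insert a s ha ih => rw [Finset.sum_insert ha, Finset.prod_insert ha, ec_add, ih]
    exact this _
  simp_rw [h]
  rw [_root_.box, volume_pi, Measure.restrict_pi_pi,
    integral_fintype_prod_eq_prod (f := fun j (x : ℝ) => ec (x * n j))]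
  simp_rw [integral_ec_mul_int]
  by_cases hn : n = 0
  · simp [hn]
  · rw [if_neg hn]
    obtain ⟨j, hj⟩ := Function.ne_iff.1 hn
    exact Finset.prod_eq_zero (Finset.mem_univ j) (if_neg (by simpa using hj))

/-- The exponential polynomial with frequencies `Φ a`, `a ∈ A`. -/
def trig {ι : Type*} (Φ : ι → Fin k → ℤ) (A : Finset ι) (α : Fin k → ℝ) : ℂ :=
  ∑ a ∈ A, chr (Φ a) α

/-- The number of solutions of `Φ a = Φ b` with `a ∈ A`, `b ∈ B`. -/
def cnt {ι : Type*} (Φ : ι → Fin k → ℤ) (A B : Finset ι) : ℕ :=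
  ((A ×ˢ B).filter fun ab => Φ ab.1 = Φ ab.2).card

theorem continuous_trig {ι : Type*} (Φ : ι → Fin k → ℤ) (A : Finset ι) :
    Continuous (trig Φ A) := by
  unfold trig
  exact continuous_finsetSum _ fun a _ => continuous_chr _

theorem integral_trig_mul_conj {ι : Type*} (Φ : ι → Fin k → ℤ) (A B : Finset ι) :
    ∫ α in box k, trig Φ A α * (starRingEnd ℂ) (trig Φ B α) = cnt Φ A B := by
  have h : ∀ α, trig Φ A α * (starRingEnd ℂ) (trig Φ B α)
      = ∑ ab ∈ A ×ˢ B, chr (Φ ab.1 - Φ ab.2) α := by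
    intro α
    rw [trig, trig, map_sum, Finset.sum_mul_sum, Finset.sum_product]
    refine Finset.sum_congr rfl fun a _ => Finset.sum_congr rfl fun b _ => ?_
    rw [conj_chr, ← chr_add, sub_eq_add_neg]
  simp_rw [h]
  rw [integral_finsetSum _ fun ab _ => integrableOn_box (continuous_chr _)]
  simp_rw [integral_chr, sub_eq_zero]
  rw [cnt, Finset.sum_boole]

theorem cnt_self_eq_integral {ι : Type*} (Φ : ι → Fin k → ℤ) (A : Finset ι) :
    (cnt Φ A A : ℝ) = ∫ α in box k, ‖trig Φ A α‖ ^ 2 := by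
  have h := integral_trig_mul_conj Φ A A
  have h2 : ∀ α, trig Φ A α * (starRingEnd ℂ) (trig Φ A α) = ((‖trig Φ A α‖ ^ 2 : ℝ) : ℂ) := by
    intro α; rw [Complex.mul_conj, Complex.normSq_eq_norm_sq]
  simp_rw [h2] at h
  rw [integral_complex_ofReal] at h
  exact_mod_cast h.symm

/-- A sum of solution counts is bounded by the integral of the absolute value. -/
theorem sum_cnt_le_integral {ι κ : Type*} (Φ : ι → Fin k → ℤ) (s : Finset κ) (A : κ → Finset ι)
    (B : Finset ι) : (∑ i ∈ s, (cnt Φ (A i) B : ℝ)) ≤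
      ∫ α in box k, ‖∑ i ∈ s, trig Φ (A i) α‖ * ‖trig Φ B α‖ := by
  have h : ((∑ i ∈ s, (cnt Φ (A i) B : ℝ) : ℝ) : ℂ)
      = ∫ α in box k, (∑ i ∈ s, trig Φ (A i) α) * (starRingEnd ℂ) (trig Φ B α) := by
    simp_rw [Finset.sum_mul]
    rw [integral_finsetSum]
    · push_cast
      exact Finset.sum_congr rfl fun i _ => (integral_trig_mul_conj Φ _ _).symm
    · intro i _
      exact integrableOn_box ((continuous_trig _ _).mul
        (Complex.continuous_conj.comp (continuous_trig _ _)))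
  have h0 : (0:ℝ) ≤ ∑ i ∈ s, (cnt Φ (A i) B : ℝ) := Finset.sum_nonneg fun _ _ => Nat.cast_nonneg _
  calc (∑ i ∈ s, (cnt Φ (A i) B : ℝ)) = ‖((∑ i ∈ s, (cnt Φ (A i) B : ℝ) : ℝ) : ℂ)‖ := by
        rw [Complex.norm_real, Real.norm_of_nonneg h0]
    _ ≤ _ := by
        rw [h]
        refine (norm_integral_le_integral_norm _).trans (le_of_eq ?_)
        simp

theorem cnt_comm {ι : Type*} (Φ : ι → Fin k → ℤ) (A B : Finset ι) : cnt Φ A B = cnt Φ B A := by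
  unfold cnt
  refine Finset.card_bij' (fun ab _ => ab.swap) (fun ab _ => ab.swap) ?_ ?_ ?_ ?_ <;>
    simp +contextual [and_comm]

theorem cnt_mono {ι : Type*} (Φ : ι → Fin k → ℤ) {A A' B B' : Finset ι} (hA : A ⊆ A')
    (hB : B ⊆ B') : cnt Φ A B ≤ cnt Φ A' B' :=
  Finset.card_le_card (Finset.filter_subset_filter _ (Finset.product_subset_product hA hB))

theorem cnt_le_sum_of_cover {ι κ : Type*} (Φ : ι → Fin k → ℤ) (A B : Finset ι) (s : Finset κ)
    (A' : κ → Finset ι) (h : ∀ a ∈ A, ∃ i ∈ s, a ∈ A' i) :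
    cnt Φ A B ≤ ∑ i ∈ s, cnt Φ (A' i) B := by
  unfold cnt
  refine le_trans (Finset.card_le_card ?_) Finset.card_biUnion_le
  intro ab hab
  simp only [Finset.mem_filter, Finset.mem_product, Finset.mem_biUnion] at hab ⊢
  obtain ⟨i, hi, hai⟩ := h _ hab.1.1
  exact ⟨i, hi, ⟨hai, hab.1.2⟩, hab.2⟩

/-- Splitting a set of tuples into two parts. -/
theorem cnt_self_le_of_cover {ι : Type*} (Φ : ι → Fin k → ℤ) (W G H : Finset ι)
    (h : ∀ a ∈ W, a ∈ G ∨ a ∈ H) : cnt Φ W W ≤ cnt Φ G G + 2 * cnt Φ H W := by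
  have : cnt Φ W W ≤ cnt Φ G G + (cnt Φ H W + cnt Φ W H) := by
    unfold cnt
    refine le_trans (Finset.card_le_card ?_) ((Finset.card_union_le _ _).trans
      (Nat.add_le_add_left (Finset.card_union_le _ _) _))
    intro ab hab
    simp only [Finset.mem_filter, Finset.mem_product, Finset.mem_union] at hab ⊢
    have h1 := h _ hab.1.1
    have h2 := h _ hab.1.2
    tauto
  rw [cnt_comm Φ W H] at this
  omega

theorem cnt_le_of_injOn {ι ι' : Type*} (Φ : ι → Fin k → ℤ) (Φ' : ι' → Fin k → ℤ)
    (A : Finset ι) (B : Finset ι') (f : ι → ι') (hf : ∀ a ∈ A, f a ∈ B)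
    (hinj : Set.InjOn f A) (hΦ : ∀ a ∈ A, ∀ b ∈ A, Φ a = Φ b → Φ' (f a) = Φ' (f b)) :
    cnt Φ A A ≤ cnt Φ' B B := by
  unfold cnt
  refine Finset.card_le_card_of_injOn (fun ab => (f ab.1, f ab.2)) ?_ ?_
  · intro ab hab
    simp only [Finset.coe_filter, Finset.mem_product, Set.mem_ofPred_eq] at hab ⊢
    exact ⟨⟨hf _ hab.1.1, hf _ hab.1.2⟩, hΦ _ hab.1.1 _ hab.1.2 hab.2⟩
  · intro ab hab cd hcd h
    simp only [Finset.coe_filter, Finset.mem_product, Set.mem_ofPred_eq] at hab hcd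
    simp only [Prod.mk.injEq] at h
    exact Prod.ext (hinj hab.1.1 hcd.1.1 h.1) (hinj hab.1.2 hcd.1.2 h.2)

/-- The frequency of a pair is the sum of the frequencies. -/
def pairFreq {ι κ : Type*} (Φ : ι → Fin k → ℤ) (Ψ : κ → Fin k → ℤ) (x : ι × κ) : Fin k → ℤ :=
  Φ x.1 + Ψ x.2

theorem trig_product {ι κ : Type*} (Φ : ι → Fin k → ℤ) (Ψ : κ → Fin k → ℤ) (A : Finset ι)
    (B : Finset κ) (α : Fin k → ℝ) :
    trig (pairFreq Φ Ψ) (A ×ˢ B) α = trig Φ A α * trig Ψ B α := by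
  simp only [trig, pairFreq, chr_add, Finset.sum_mul_sum, Finset.sum_product]

/-- The powers `(x, x², …, x^k)`. -/
def powVec (k : ℕ) (x : ℤ) : Fin k → ℤ := fun j => x ^ ((j : ℕ) + 1)

/-- The power sums of a tuple of integers. -/
def tupFreq (k : ℕ) {ι : Type*} [Fintype ι] (x : ι → ℤ) : Fin k → ℤ := ∑ i, powVec k (x i)

theorem trig_piFinset {ι : Type*} [Fintype ι] [DecidableEq ι] (S : ι → Finset ℤ) (α : Fin k → ℝ) :
    trig (tupFreq k) (Fintype.piFinset S) α = ∏ i, trig (powVec k) (S i) α := by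
  simp only [trig, tupFreq, chr_sum, Finset.prod_univ_sum]

/-- The integers in `[1, X]` congruent to `ξ` modulo `m`. -/
def cls (X : ℝ) (m ξ : ℤ) : Finset ℤ :=
  (Finset.Icc (1:ℤ) ⌊X⌋).filter fun x => Int.ModEq m x ξ

theorem fexp_eq_trig (p : ℕ) (X : ℝ) (c : ℕ) (ξ : ℤ) :
    fexp k p X c ξ = trig (powVec k) (cls X ((p:ℤ) ^ c) ξ) := by
  funext α
  simp only [fexp, trig, cls, chr, powVec]
  push_cast
  rfl

/-- The integers in `[1, X]`. -/
def allX (X : ℝ) : Finset ℤ := Finset.Icc (1:ℤ) ⌊X⌋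

theorem Jcount_eq_cnt (u k : ℕ) (X : ℝ) :
    Jcount u k X = cnt (tupFreq k) (Fintype.piFinset fun _ : Fin u => allX X)
      (Fintype.piFinset fun _ => allX X) := by
  unfold Jcount cnt
  rw [← Set.ncard_coe_finset]
  congr 1
  ext ⟨x, y⟩
  simp only [Set.mem_ofPred_eq, Finset.coe_filter, Finset.mem_product, Fintype.mem_piFinset, allX,
    Finset.mem_Icc, Int.le_floor, and_assoc]
  refine and_congr_right fun _ => and_congr_right fun _ => ?_
  rw [funext_iff]
  simp only [tupFreq, Finset.sum_apply, powVec, Finset.sum_sub_distrib, sub_eq_zero]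
  constructor
  · intro h j
    exact h _ ⟨by omega, by omega⟩
  · intro h j hj
    have := h ⟨j - 1, by omega⟩
    simpa [Nat.sub_add_cancel hj.1] using this

theorem cnt_piFinset_const {ι : Type*} [Fintype ι] [DecidableEq ι] (S : Finset ℤ) :
    (cnt (tupFreq k) (Fintype.piFinset fun _ : ι => S) (Fintype.piFinset fun _ => S) : ℝ)
      = ∫ α in box k, ‖trig (powVec k) S α‖ ^ (2 * Fintype.card ι) := by
  rw [cnt_self_eq_integral]
  simp_rw [trig_piFinset, Finset.prod_const, Finset.card_univ, norm_pow, ← pow_mul, mul_comm 2]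

theorem Jcount_eq_integral (u k : ℕ) (X : ℝ) :
    (Jcount u k X : ℝ) = ∫ α in box k, ‖trig (powVec k) (allX X) α‖ ^ (2 * u) := by
  rw [Jcount_eq_cnt, cnt_piFinset_const, Fintype.card_fin]

theorem cnt_piFinset_allX {ι : Type*} [Fintype ι] [DecidableEq ι] (X : ℝ) :
    cnt (tupFreq k) (Fintype.piFinset fun _ : ι => allX X) (Fintype.piFinset fun _ => allX X)
      = Jcount (Fintype.card ι) k X := by
  have := (cnt_piFinset_const (k := k) (ι := ι) (allX X)).trans
    (Jcount_eq_integral (Fintype.card ι) k X).symm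
  exact_mod_cast this

/-- Mean values of a product are monotone in the underlying sets. -/
theorem integral_mono_subset {ι κ : Type*} (Φ : ι → Fin k → ℤ) (Ψ : κ → Fin k → ℤ)
    {A A' : Finset ι} {B B' : Finset κ} (hA : A ⊆ A') (hB : B ⊆ B') :
    ∫ α in box k, ‖trig Φ A α‖ ^ 2 * ‖trig Ψ B α‖ ^ 2 ≤
      ∫ α in box k, ‖trig Φ A' α‖ ^ 2 * ‖trig Ψ B' α‖ ^ 2 := by
  have h : ∀ (A : Finset ι) (B : Finset κ), ∫ α in box k, ‖trig Φ A α‖ ^ 2 * ‖trig Ψ B α‖ ^ 2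
      = cnt (pairFreq Φ Ψ) (A ×ˢ B) (A ×ˢ B) := by
    intro A B
    rw [cnt_self_eq_integral]
    simp_rw [trig_product, norm_mul, mul_pow]
  rw [h, h]
  exact_mod_cast cnt_mono _ (Finset.product_subset_product hA hB)
    (Finset.product_subset_product hA hB)

theorem trig_piFinset_ite {ι : Type*} [Fintype ι] [DecidableEq ι] (S : Finset ι) (A B : Finset ℤ)
    (α : Fin k → ℝ) :
    trig (tupFreq k) (Fintype.piFinset fun i => if i ∈ S then B else A) α =
      trig (powVec k) B α ^ S.card * trig (powVec k) A α ^ (Fintype.card ι - S.card) := by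
  rw [trig_piFinset]
  have h : ∀ i, trig (powVec k) (if i ∈ S then B else A) α
      = if i ∈ S then trig (powVec k) B α else trig (powVec k) A α := by
    intro i; split_ifs <;> rfl
  simp_rw [h]
  rw [Finset.prod_ite, Finset.prod_const, Finset.prod_const]
  congr 2
  · congr 1; ext; simp
  · rw [← Finset.card_compl]; congr 1; ext; simp

theorem young_diagonal {g h ε : ℝ} (hh : 0 ≤ h) (hε : 0 < ε) {u : ℕ} (hu : 2 ≤ u) :
    h * g ^ (u - 2) * g ^ u ≤ ε * g ^ (2 * u) + (1 / ε) ^ (u - 1) * h ^ u := by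
  obtain ⟨v, rfl⟩ : ∃ v, u = v + 2 := ⟨u - 2, by omega⟩
  have e1 : h * g ^ (v + 2 - 2) * g ^ (v + 2) = h * (g ^ 2) ^ (v + 1) := by
    rw [Nat.add_sub_cancel]; ring
  have e2 : g ^ (2 * (v + 2)) = g ^ 2 * (g ^ 2) ^ (v + 1) := by ring
  rw [e1, e2, show v + 2 - 1 = v + 1 by omega]
  rcases le_total h (ε * g ^ 2) with hle | hle
  · have : h * (g ^ 2) ^ (v + 1) ≤ ε * g ^ 2 * (g ^ 2) ^ (v + 1) := by gcongr
    have h0 : 0 ≤ (1 / ε) ^ (v + 1) * h ^ (v + 2) := by positivity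
    linarith
  · have hg2 : g ^ 2 ≤ 1 / ε * h := by
      rw [one_div, inv_mul_eq_div, le_div_iff₀ hε]; linarith
    have : h * (g ^ 2) ^ (v + 1) ≤ h * (1 / ε * h) ^ (v + 1) := by gcongr
    have h0 : 0 ≤ ε * (g ^ 2 * (g ^ 2) ^ (v + 1)) := by positivity
    calc _ ≤ h * (1 / ε * h) ^ (v + 1) := this
      _ = (1 / ε) ^ (v + 1) * h ^ (v + 2) := by rw [mul_pow]; ring
      _ ≤ _ := by linarith

theorem le_sq_add_inv {y ε : ℝ} (hε : 0 < ε) : y ≤ ε * y ^ 2 + 1 / ε := by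
  have h : 0 ≤ ε * (y - 1 / (2 * ε)) ^ 2 := by positivity
  have h2 : ε * (y - 1 / (2 * ε)) ^ 2 = ε * y ^ 2 - y + 1 / (4 * ε) := by
    field_simp; ring
  have h3 : 1 / (4 * ε) ≤ 1 / ε := by
    apply one_div_le_one_div_of_le hε; linarith
  linarith

theorem integral_trig_two_smul (u : ℕ) (X : ℝ) :
    ∫ α in box k, ‖trig (fun x => 2 • powVec k x) (allX X) α‖ ^ (2 * u) = Jcount u k X := by
  rw [Jcount_eq_cnt]
  have h : cnt (tupFreq k) (Fintype.piFinset fun _ : Fin u => allX X)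
      (Fintype.piFinset fun _ => allX X) =
      cnt (fun x => 2 • tupFreq k x) (Fintype.piFinset fun _ : Fin u => allX X)
      (Fintype.piFinset fun _ => allX X) := by
    unfold cnt
    congr 1
    refine Finset.filter_congr fun ab _ => ?_
    exact (smul_right_injective _ (two_ne_zero (α := ℕ))).eq_iff.symm
  rw [h, cnt_self_eq_integral]
  congr 1
  funext α
  have : trig (fun x => 2 • tupFreq k x) (Fintype.piFinset fun _ : Fin u => allX X) α
      = trig (fun x => 2 • powVec k x) (allX X) α ^ u := by
    simp only [trig, tupFreq, Finset.smul_sum, chr_sum]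
    have := (Finset.prod_univ_sum (fun _ : Fin u => allX X)
      (fun _ x => chr (2 • powVec k x) α)).symm
    rw [this]
    simp
  rw [this, norm_pow, ← pow_mul, mul_comm]

/-- The tuples with pairwise distinct entries in `[1, X]`. -/
def injTuples (ι : Type*) [Fintype ι] [DecidableEq ι] (X : ℝ) : Finset (ι → ℤ) :=
  (Fintype.piFinset fun _ => allX X).filter fun x => Function.Injective x

theorem cnt_diagonal_le_sum {ι : Type*} [Fintype ι] [DecidableEq ι] (i j : ι) (X : ℝ) :
    cnt (tupFreq k) ((Fintype.piFinset fun _ : ι => allX X).filter fun x => x i = x j)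
      (Fintype.piFinset fun _ => allX X) ≤ ∑ z ∈ allX X, cnt (tupFreq k)
      (Fintype.piFinset fun l => if l ∈ ({i, j} : Finset ι) then {z} else allX X)
      (Fintype.piFinset fun _ => allX X) := by
  refine cnt_le_sum_of_cover _ _ _ _ _ fun a ha => ?_
  obtain ⟨haW, hij⟩ := Finset.mem_filter.1 ha
  rw [Fintype.mem_piFinset] at haW
  refine ⟨a i, haW i, ?_⟩
  rw [Fintype.mem_piFinset]
  intro l
  by_cases hl : l ∈ ({i, j} : Finset ι)
  · rw [if_pos hl]
    simp only [Finset.mem_insert, Finset.mem_singleton] at hl ⊢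
    rcases hl with rfl | rfl
    · rfl
    · exact hij.symm
  · rw [if_neg hl]; exact haW l

theorem sum_cnt_diagonal_le {ι : Type*} [Fintype ι] [DecidableEq ι] {i j : ι} (hij : i ≠ j)
    (X : ℝ) {ε ε' : ℝ} (hε : 0 < ε) (hε' : 0 < ε') :
    ∑ z ∈ allX X, (cnt (tupFreq k)
      (Fintype.piFinset fun l => if l ∈ ({i, j} : Finset ι) then {z} else allX X)
      (Fintype.piFinset fun _ => allX X) : ℝ) ≤
    (ε + (1 / ε) ^ (Fintype.card ι - 1) * ε') * Jcount (Fintype.card ι) k X +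
      (1 / ε) ^ (Fintype.card ι - 1) * (1 / ε') := by
  set u := Fintype.card ι with hu
  have hcard : ({i, j} : Finset ι).card = 2 := Finset.card_pair hij
  have hu2 : 2 ≤ u := by
    rw [hu, ← hcard]; exact Finset.card_le_univ _
  refine (sum_cnt_le_integral (tupFreq k) (allX X) _ _).trans ?_
  set g : (Fin k → ℝ) → ℝ := fun α => ‖trig (powVec k) (allX X) α‖ with hg
  set h : (Fin k → ℝ) → ℝ := fun α => ‖trig (fun x => 2 • powVec k x) (allX X) α‖ with hh
  have hgc : Continuous g := (continuous_trig _ _).norm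
  have hhc : Continuous h := (continuous_trig _ _).norm
  set E := (1 / ε) ^ (u - 1) with hE
  have hE0 : 0 ≤ E := by positivity
  have key : ∀ α, ‖∑ z ∈ allX X, trig (tupFreq k)
      (Fintype.piFinset fun l => if l ∈ ({i, j} : Finset ι) then {z} else allX X) α‖ *
      ‖trig (tupFreq k) (Fintype.piFinset fun _ : ι => allX X) α‖ = h α * g α ^ (u - 2) * g α ^ u := by
    intro α
    simp_rw [trig_piFinset_ite, hcard]
    rw [← Finset.sum_mul, trig_piFinset, Finset.prod_const, Finset.card_univ, norm_mul, norm_pow,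
      norm_pow]
    congr 3
    rw [trig]
    refine Finset.sum_congr rfl fun z _ => ?_
    simp [trig, two_smul, chr_add, sq]
  simp_rw [key]
  have hpt : ∀ α, h α * g α ^ (u - 2) * g α ^ u ≤
      ε * g α ^ (2 * u) + E * (ε' * h α ^ (2 * u) + 1 / ε') := by
    intro α
    refine (young_diagonal (norm_nonneg _) hε hu2).trans ?_
    have := le_sq_add_inv (y := h α ^ u) hε'
    rw [← pow_mul, mul_comm u 2] at this
    gcongr
  have hJ1 : ∫ α in box k, g α ^ (2 * u) = Jcount u k X := (Jcount_eq_integral u k X).symm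
  have hJ2 : ∫ α in box k, h α ^ (2 * u) = Jcount u k X := integral_trig_two_smul u X
  have hvol : ∫ _α in box k, (1 / ε' : ℝ) = 1 / ε' := by
    have hv : volume (box k) = 1 := by simp [_root_.box, volume_pi_pi]
    rw [setIntegral_const, Measure.real, hv]
    simp
  calc _ ≤ ∫ α in box k, (ε * g α ^ (2 * u) + E * (ε' * h α ^ (2 * u) + 1 / ε')) :=
        integral_mono (integrableOn_box (by fun_prop)) (integrableOn_box (by fun_prop)) hpt
    _ = ε * Jcount u k X + E * (ε' * Jcount u k X + 1 / ε') := by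
        rw [integral_add (integrableOn_box (by fun_prop)) (integrableOn_box (by fun_prop)),
          integral_const_mul, integral_const_mul,
          integral_add (integrableOn_box (by fun_prop)) (integrableOn_box (by fun_prop)),
          integral_const_mul, hJ1, hJ2, hvol]
    _ = _ := by ring

/-- Up to a bounded error, a positive proportion of all solutions have distinct coordinates. -/
theorem exists_Jcount_le_injTuples (ι : Type*) [Fintype ι] [DecidableEq ι] (k : ℕ) :
    ∃ C : ℝ, 0 ≤ C ∧ ∀ X : ℝ, (Jcount (Fintype.card ι) k X : ℝ) ≤
      2 * cnt (tupFreq k) (injTuples ι X) (injTuples ι X) + C := by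
  set u := Fintype.card ι with hu
  set P : ℝ := ((Finset.univ : Finset ι).offDiag.card : ℝ) with hP
  have hP0 : 0 ≤ P := Nat.cast_nonneg _
  set ε : ℝ := 1 / (8 * (P + 1)) with hε
  have hε0 : 0 < ε := by positivity
  set E : ℝ := (1 / ε) ^ (u - 1) with hE
  have hE0 : 0 < E := by positivity
  refine ⟨4 * (P * (E * (1 / (ε / E)))), by positivity, fun X => ?_⟩
  set W := Fintype.piFinset fun _ : ι => allX X with hW
  set H := W.filter fun x => ¬ Function.Injective x with hH
  have h1 : cnt (tupFreq k) W W ≤ cnt (tupFreq k) (injTuples ι X) (injTuples ι X) +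
      2 * cnt (tupFreq k) H W := by
    refine cnt_self_le_of_cover _ _ _ _ fun a ha => ?_
    by_cases hinj : Function.Injective a
    · exact Or.inl (Finset.mem_filter.2 ⟨ha, hinj⟩)
    · exact Or.inr (Finset.mem_filter.2 ⟨ha, hinj⟩)
  have h2 : cnt (tupFreq k) H W ≤ ∑ ij ∈ (Finset.univ : Finset ι).offDiag,
      cnt (tupFreq k) (W.filter fun x => x ij.1 = x ij.2) W := by
    refine cnt_le_sum_of_cover (tupFreq k) H W _ _ fun a ha => ?_
    obtain ⟨haW, hinj⟩ := Finset.mem_filter.1 ha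
    simp only [Function.Injective, not_forall] at hinj
    obtain ⟨i, j, hij, hne⟩ := hinj
    exact ⟨(i, j), Finset.mem_offDiag.2 ⟨Finset.mem_univ _, Finset.mem_univ _, hne⟩,
      Finset.mem_filter.2 ⟨haW, hij⟩⟩
  have h3 : (cnt (tupFreq k) H W : ℝ) ≤ P * ((ε + E * (ε / E)) * Jcount u k X +
      E * (1 / (ε / E))) := by
    refine (Nat.cast_le.2 h2).trans ?_
    push_cast
    rw [hP, ← nsmul_eq_mul]
    refine Finset.sum_le_card_nsmul _ _ _ fun ij hij => ?_
    refine le_trans (Nat.cast_le.2 (cnt_diagonal_le_sum ij.1 ij.2 X)) ?_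
    rw [Nat.cast_sum]
    exact sum_cnt_diagonal_le (Finset.mem_offDiag.1 hij).2.2 X hε0 (by positivity)
  have h4 : (Jcount u k X : ℝ) = cnt (tupFreq k) W W := by
    rw [hW, cnt_piFinset_allX]
  have h1' : (cnt (tupFreq k) W W : ℝ) ≤ cnt (tupFreq k) (injTuples ι X) (injTuples ι X) +
      2 * cnt (tupFreq k) H W := by exact_mod_cast h1
  have hPε : P * (ε + E * (ε / E)) ≤ 1 / 4 := by
    rw [mul_div_cancel₀ _ hE0.ne', hε]
    rw [← two_mul, mul_one_div, mul_div_assoc', div_le_iff₀ (by positivity)]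
    linarith
  have hJ0 : (0:ℝ) ≤ Jcount u k X := Nat.cast_nonneg _
  have h5 : P * (ε + E * (ε / E)) * Jcount u k X ≤ 1 / 4 * Jcount u k X := by gcongr
  rw [← h4] at h1'
  linarith

/-- If no value is taken more than `t` times, the entries can be permuted so that every row
of the array has distinct values. -/
theorem exists_perm_rows_injective {t r : ℕ} (v : Fin t × Fin r → ℤ)
    (hv : ∀ a, (Finset.univ.filter fun i => v i = a).card ≤ t) :
    ∃ σ : Equiv.Perm (Fin t × Fin r), ∀ i, Function.Injective fun m => v (σ (i, m)) := by
  set e : Fin t × Fin r ≃ Fin (r * t) := (Equiv.prodComm _ _).trans finProdFinEquiv with he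
  have hev : ∀ i m, (e (i, m) : ℕ) = i + t * m := by
    intro i m; simp [he, finProdFinEquiv]
  set w : Fin (r * t) → ℤ := fun q => v (e.symm q) with hw
  have hmono := Tuple.monotone_sort w
  refine ⟨(e.trans (Tuple.sort w)).trans e.symm, fun i => ?_⟩
  have hval : ∀ m, v (((e.trans (Tuple.sort w)).trans e.symm) (i, m)) =
      (w ∘ Tuple.sort w) (e (i, m)) := by intro m; simp [hw]
  have main : ∀ m m' : Fin r, m < m' → (w ∘ Tuple.sort w) (e (i, m)) ≠
      (w ∘ Tuple.sort w) (e (i, m')) := by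
    intro m m' hlt heq
    set a := (w ∘ Tuple.sort w) (e (i, m)) with ha
    have hsub : (Finset.Icc (e (i, m)) (e (i, m'))).card ≤
        (Finset.univ.filter fun i => v i = a).card := by
      refine Finset.card_le_card_of_injOn (fun q => e.symm (Tuple.sort w q)) ?_ ?_
      · intro q hq
        rw [Finset.mem_coe, Finset.mem_Icc] at hq
        rw [Finset.mem_coe, Finset.mem_filter]
        refine ⟨Finset.mem_univ _, le_antisymm ?_ ?_⟩
        · have := hmono hq.2
          rw [← heq] at this
          simpa [hw] using this
        · have := hmono hq.1
          simpa [hw, ha] using this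
      · intro q _ q' _ h
        simpa using h
    have hc := hsub.trans (hv a)
    rw [Fin.card_Icc, hev, hev] at hc
    have : t * (m + 1) ≤ t * (m' : ℕ) := Nat.mul_le_mul_left _ hlt
    rw [Nat.mul_add] at this
    omega
  intro m m' h
  simp only [hval] at h
  rcases lt_trichotomy m m' with hlt | heq | hgt
  · exact absurd h (main _ _ hlt)
  · exact heq
  · exact absurd h.symm (main _ _ hgt)

/-- The representative of `x` modulo `m` in `[1, m]`. -/
def oneRep (m x : ℤ) : ℤ := (x - 1) % m + 1

theorem oneRep_mem {m : ℤ} (hm : 0 < m) (x : ℤ) : oneRep m x ∈ Finset.Icc 1 m := by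
  rw [Finset.mem_Icc, oneRep]
  have h1 := Int.emod_nonneg (x - 1) hm.ne'
  have h2 := Int.emod_lt_of_pos (x - 1) hm
  omega

theorem oneRep_modEq (m x : ℤ) : Int.ModEq m (oneRep m x) x := by
  have h : Int.ModEq m ((x - 1) % m + 1) (x - 1 + 1) := (Int.mod_modEq _ _).add_right 1
  simpa [oneRep] using h

theorem oneRep_eq_iff {m x v : ℤ} (hv : v ∈ Finset.Icc 1 m) :
    oneRep m x = v ↔ Int.ModEq m x v := by
  constructor
  · rintro rfl
    exact (oneRep_modEq m x).symm
  · intro h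
    rw [Finset.mem_Icc] at hv
    have h1 : Int.ModEq m (x - 1) (v - 1) := h.sub_right 1
    rw [oneRep, h1, Int.emod_eq_of_lt (by omega) (by omega)]
    ring

theorem mem_cls {X : ℝ} {m ξ x : ℤ} : x ∈ cls X m ξ ↔ x ∈ allX X ∧ Int.ModEq m x ξ := by
  simp [cls, allX]

/-- Sorting tuples by their residue classes modulo `m`. -/
theorem sum_prod_trig_cls {ι : Type*} [Fintype ι] [DecidableEq ι] (X : ℝ) {m : ℤ} (hm : 0 < m)
    (Q : (ι → ℤ) → Prop) [DecidablePred Q]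
    (hQ : ∀ x y : ι → ℤ, (∀ i, Int.ModEq m (x i) (y i)) → (Q x ↔ Q y)) (α : Fin k → ℝ) :
    ∑ v ∈ (Fintype.piFinset fun _ : ι => Finset.Icc 1 m).filter Q,
      ∏ i, trig (powVec k) (cls X m (v i)) α =
    trig (tupFreq k) ((Fintype.piFinset fun _ : ι => allX X).filter Q) α := by
  symm
  rw [trig, ← Finset.sum_fiberwise_of_maps_to (g := fun x i => oneRep m (x i))
    (t := (Fintype.piFinset fun _ : ι => Finset.Icc 1 m).filter Q)]
  · refine Finset.sum_congr rfl fun v hv => ?_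
    rw [← trig_piFinset, trig]
    refine Finset.sum_congr ?_ fun _ _ => rfl
    rw [Finset.mem_filter, Fintype.mem_piFinset] at hv
    ext x
    simp only [Finset.mem_filter, Fintype.mem_piFinset, mem_cls, funext_iff]
    constructor
    · rintro ⟨⟨h1, _⟩, h3⟩ i
      exact ⟨h1 i, (oneRep_eq_iff (hv.1 i)).1 (h3 i)⟩
    · intro h
      exact ⟨⟨fun i => (h i).1, (hQ _ _ fun i => (h i).2).2 hv.2⟩,
        fun i => (oneRep_eq_iff (hv.1 i)).2 (h i).2⟩
  · intro x hx
    rw [Finset.mem_filter, Fintype.mem_piFinset] at hx ⊢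
    exact ⟨fun i => oneRep_mem hm _, (hQ _ _ fun i => oneRep_modEq m (x i)).2 hx.2⟩

/-- The entries of `x` are pairwise incongruent modulo `m`. -/
def DistinctMod {ι : Type*} (m : ℤ) (x : ι → ℤ) : Prop :=
  ∀ i j, Int.ModEq m (x i) (x j) → i = j

theorem distinctMod_congr {ι : Type*} {m : ℤ} {x y : ι → ℤ} (h : ∀ i, Int.ModEq m (x i) (y i)) :
    DistinctMod m x ↔ DistinctMod m y := by
  unfold DistinctMod
  refine forall_congr' fun i => forall_congr' fun j => ?_
  have : Int.ModEq m (x i) (x j) ↔ Int.ModEq m (y i) (y j) :=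
    ⟨fun hh => (h i).symm.trans (hh.trans (h j)), fun hh => (h i).trans (hh.trans (h j).symm)⟩
  rw [this]

theorem injective_zmod_iff {ι : Type*} {m : ℕ} {x : ι → ℤ} :
    (Function.Injective fun i => (x i : ZMod m)) ↔ DistinctMod (m : ℤ) x := by
  simp only [Function.Injective, DistinctMod, ZMod.intCast_eq_intCast_iff]

/-- The tuples counted by `Ftilde`: pairwise incongruent modulo `p` and avoiding `η`. -/
def avoidTuples (p r : ℕ) (X : ℝ) (η : ℤ) : Finset (Fin r → ℤ) :=
  (Fintype.piFinset fun _ => allX X).filter fun x =>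
    DistinctMod (p : ℤ) x ∧ ∀ i, ¬ Int.ModEq (p : ℤ) (x i) η

/-- The tuples counted by `Fexp`. -/
def condTuples (p r : ℕ) (X : ℝ) (c : ℕ) (ξ : ℤ) : Finset (Fin r → ℤ) :=
  (Fintype.piFinset fun _ => allX X).filter fun x =>
    (∀ i, Int.ModEq ((p : ℤ) ^ c) (x i) ξ) ∧ DistinctMod ((p : ℤ) ^ (c + 1)) x

theorem Fexp_eq_trig {p : ℕ} (hp : 0 < p) (r : ℕ) (X : ℝ) (c : ℕ) (ξ : ℤ) :
    Fexp k p r X c ξ = trig (tupFreq k) (condTuples p r X c ξ) := by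
  funext α
  have hm : (0:ℤ) < (p:ℤ) ^ (c + 1) := by positivity
  rw [condTuples, ← sum_prod_trig_cls X hm, Fexp, ← finsum_mem_coe_finset]
  · simp_rw [fexp_eq_trig]
    congr 1
    funext v
    have : v ∈ XiSet p r c ξ ↔ v ∈ (((Fintype.piFinset fun _ : Fin r =>
        Finset.Icc 1 ((p:ℤ) ^ (c + 1))).filter fun x => (∀ i, Int.ModEq ((p : ℤ) ^ c) (x i) ξ) ∧
          DistinctMod ((p : ℤ) ^ (c + 1)) x : Finset (Fin r → ℤ)) : Set (Fin r → ℤ)) := by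
      rw [Finset.mem_coe, Finset.mem_filter, Fintype.mem_piFinset]
      simp only [XiSet, Set.mem_ofPred_eq, Finset.mem_Icc, injective_zmod_iff, Nat.cast_pow]
    simp only [this]
  · intro x y hxy
    refine and_congr (forall_congr' fun i => ?_) (distinctMod_congr hxy)
    have h1 : Int.ModEq ((p:ℤ) ^ c) (x i) (y i) := (hxy i).of_dvd (pow_dvd_pow _ (Nat.le_succ c))
    exact ⟨fun h => h1.symm.trans h, fun h => h1.trans h⟩

theorem Ftilde_eq_trig {p : ℕ} (hp : 0 < p) (r : ℕ) (X : ℝ) (η : ℤ) :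
    Ftilde k p r X η = trig (tupFreq k) (avoidTuples p r X η) := by
  funext α
  have hm : (0:ℤ) < (p:ℤ) := by positivity
  rw [avoidTuples, ← sum_prod_trig_cls X hm, Ftilde, ← finsum_mem_coe_finset]
  · simp_rw [fexp_eq_trig, pow_one]
    congr 1
    funext v
    have : v ∈ XiTilde p r η ↔ v ∈ (((Fintype.piFinset fun _ : Fin r =>
        Finset.Icc 1 (p:ℤ)).filter fun x => DistinctMod (p : ℤ) x ∧
          ∀ i, ¬ Int.ModEq (p : ℤ) (x i) η : Finset (Fin r → ℤ)) : Set (Fin r → ℤ)) := by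
      rw [Finset.mem_coe, Finset.mem_filter, Fintype.mem_piFinset]
      simp only [XiTilde, XiSet, Set.mem_ofPred_eq, Finset.mem_Icc, injective_zmod_iff,
        pow_zero, zero_add, pow_one, Int.modEq_one, implies_true, true_and, and_assoc]
    simp only [this]
  · intro x y hxy
    refine and_congr (distinctMod_congr hxy) (forall_congr' fun i => not_congr ?_)
    exact ⟨fun h => (hxy i).symm.trans h, fun h => (hxy i).trans h⟩

theorem avoidTuples_congr {p r : ℕ} {X : ℝ} {η ξ : ℤ} (h : Int.ModEq (p:ℤ) η ξ) :
    avoidTuples p r X η = avoidTuples p r X ξ := by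
  unfold avoidTuples
  refine Finset.filter_congr fun x _ => and_congr_right fun _ => forall_congr' fun i => ?_
  exact not_congr ⟨fun hh => hh.trans h, fun hh => hh.trans h.symm⟩

/-- The arrays in the class `ξ` modulo `p ^ c` whose rows, after the permutation `σ`, are
pairwise incongruent modulo `p ^ (c + 1)`. -/
def rowTuples (p r t : ℕ) (X : ℝ) (c : ℕ) (ξ : ℤ) (σ : Equiv.Perm (Fin t × Fin r)) :
    Finset (Fin t × Fin r → ℤ) :=
  (Fintype.piFinset fun _ => cls X ((p:ℤ) ^ c) ξ).filter fun w =>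
    ∀ i, DistinctMod ((p:ℤ) ^ (c + 1)) fun m => w (σ (i, m))

theorem trig_rowTuples (p r t : ℕ) (X : ℝ) (c : ℕ) (ξ : ℤ) (σ : Equiv.Perm (Fin t × Fin r))
    (α : Fin k → ℝ) : trig (tupFreq k) (rowTuples p r t X c ξ σ) α =
      trig (tupFreq k) (condTuples p r X c ξ) α ^ t := by
  have h := (Finset.prod_univ_sum (fun _ : Fin t => condTuples p r X c ξ)
      (fun _ x => chr (tupFreq k x) α))
  rw [Finset.prod_const, Finset.card_univ, Fintype.card_fin] at h
  rw [trig, trig, h]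
  refine Finset.sum_bij' (fun w _ i m => w (σ (i, m))) (fun y _ q => y (σ.symm q).1 (σ.symm q).2)
    ?_ ?_ ?_ ?_ ?_
  · intro w hw
    simp only [rowTuples, condTuples, Finset.mem_filter, Fintype.mem_piFinset, mem_cls] at hw ⊢
    exact fun i => ⟨fun m => (hw.1 _).1, fun m => (hw.1 _).2, hw.2 i⟩
  · intro y hy
    simp only [rowTuples, condTuples, Finset.mem_filter, Fintype.mem_piFinset, mem_cls] at hy ⊢
    refine ⟨fun q => ⟨(hy _).1 _, (hy _).2.1 _⟩, fun i => ?_⟩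
    simpa using (hy i).2.2
  · intro w _
    funext q
    simp
  · intro y _
    funext i m
    simp
  · intro w _
    rw [← chr_sum]
    congr 1
    simp only [tupFreq]
    rw [← Equiv.sum_comp σ, Fintype.sum_prod_type]

theorem young_pow {g h l : ℝ} (hg : 0 ≤ g) (hh : 0 ≤ h) (hl : 0 < l) {a n : ℕ} (han : a ≤ n) :
    h ^ a * g ^ (n - a) ≤ l ^ a * g ^ n + (1 / l) ^ (n - a) * h ^ n := by
  obtain ⟨b, rfl⟩ := Nat.exists_eq_add_of_le han
  rw [Nat.add_sub_cancel_left]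
  rcases le_total h (l * g) with hle | hle
  · have h1 : h ^ a * g ^ b ≤ (l * g) ^ a * g ^ b := by gcongr
    have h0 : 0 ≤ (1 / l) ^ b * h ^ (a + b) := by positivity
    calc _ ≤ (l * g) ^ a * g ^ b := h1
      _ = l ^ a * g ^ (a + b) := by rw [mul_pow, pow_add]; ring
      _ ≤ _ := by linarith
  · have hg2 : g ≤ 1 / l * h := by
      rw [one_div, inv_mul_eq_div, le_div_iff₀ hl]; linarith
    have h1 : h ^ a * g ^ b ≤ h ^ a * (1 / l * h) ^ b := by gcongr
    have h0 : 0 ≤ l ^ a * g ^ (a + b) := by positivity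
    calc _ ≤ h ^ a * (1 / l * h) ^ b := h1
      _ = (1 / l) ^ b * h ^ (a + b) := by rw [mul_pow, pow_add]; ring
      _ ≤ _ := by linarith

theorem cnt_self_le_of_cover_eq {ι κ : Type*} (Φ : ι → Fin k → ℤ) (G : Finset ι) (s : Finset κ)
    (A : κ → Finset ι) (h : ∀ a ∈ G, ∃ i ∈ s, a ∈ A i) (T : (Fin k → ℝ) → ℝ)
    (hT : ∀ i ∈ s, ∀ α, ‖trig Φ (A i) α‖ = T α) :
    (cnt Φ G G : ℝ) ≤ (s.card : ℝ) ^ 2 * ∫ α in box k, T α ^ 2 := by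
  have h1 : cnt Φ G G ≤ ∑ i ∈ s, ∑ j ∈ s, cnt Φ (A j) (A i) := by
    refine (cnt_le_sum_of_cover Φ G G s A h).trans (Finset.sum_le_sum fun i _ => ?_)
    rw [cnt_comm]
    exact cnt_le_sum_of_cover Φ G (A i) s A h
  have h2 : ∀ i ∈ s, ∀ j ∈ s, (cnt Φ (A j) (A i) : ℝ) ≤ ∫ α in box k, T α ^ 2 := by
    intro i hi j hj
    have := sum_cnt_le_integral Φ {j} A (A i)
    simp only [Finset.sum_singleton] at this
    refine this.trans (le_of_eq ?_)
    congr 1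
    funext α
    rw [hT i hi, hT j hj, sq]
  calc (cnt Φ G G : ℝ) ≤ ∑ i ∈ s, ∑ j ∈ s, (cnt Φ (A j) (A i) : ℝ) := by exact_mod_cast h1
    _ ≤ ∑ i ∈ s, ∑ j ∈ s, ∫ α in box k, T α ^ 2 :=
      Finset.sum_le_sum fun i hi => Finset.sum_le_sum fun j hj => h2 i hi j hj
    _ = _ := by simp only [Finset.sum_const, nsmul_eq_mul]; ring

/-- The mean value of `|F(α;η)² f_c(α;η)^{2rt}|`. -/
def meanAvoid (k p r t : ℕ) (X : ℝ) (c : ℕ) (η : ℤ) : ℝ :=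
  ∫ α in box k, ‖trig (tupFreq k) (avoidTuples p r X η) α‖ ^ 2 *
    ‖trig (powVec k) (cls X ((p:ℤ) ^ c) η) α‖ ^ (2 * (t * r))

theorem meanAvoid_nonneg (k p r t : ℕ) (X : ℝ) (c : ℕ) (η : ℤ) : 0 ≤ meanAvoid k p r t X c η :=
  integral_nonneg fun α => by positivity

theorem Ktilde_eq_integral {p : ℕ} (hp : 0 < p) (r t : ℕ) (X : ℝ) (c : ℕ) (η : ℤ) :
    Ktilde k p r t X c η = ∫ α in box k, (‖trig (tupFreq k) (avoidTuples p r X η) α‖ *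
      ‖trig (tupFreq k) (condTuples p r X c η) α‖ ^ t) ^ 2 := by
  rw [Ktilde, Ftilde_eq_trig hp, Fexp_eq_trig hp]
  congr 1
  funext α
  rw [mul_pow, ← pow_mul, mul_comm t 2]

/-- Every array in a class modulo `p ^ c` either has rows which, after a permutation, are
incongruent modulo `p ^ (c + 1)`, or has `t + 1` entries congruent modulo `p ^ (c + 1)`. -/
theorem mem_rowTuples_or {p r t : ℕ} (hp : 0 < p) {X : ℝ} {c : ℕ} {η : ℤ}
    {w : Fin t × Fin r → ℤ} (hw : w ∈ Fintype.piFinset fun _ => cls X ((p:ℤ) ^ c) η) :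
    (∃ σ, w ∈ rowTuples p r t X c η σ) ∨
    ∃ S ∈ Finset.powersetCard (t + 1) (Finset.univ : Finset (Fin t × Fin r)),
      ∃ m ∈ Finset.range p, w ∈ Fintype.piFinset fun i =>
        if i ∈ S then cls X ((p:ℤ) ^ (c + 1)) (η + (p:ℤ) ^ c * m) else cls X ((p:ℤ) ^ c) η := by
  have hp0 : (p:ℤ) ≠ 0 := by exact_mod_cast hp.ne'
  rw [Fintype.mem_piFinset] at hw
  by_cases hv : ∀ a, (Finset.univ.filter fun i => w i % (p:ℤ) ^ (c + 1) = a).card ≤ t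
  · left
    obtain ⟨σ, hσ⟩ := exists_perm_rows_injective (fun i => w i % (p:ℤ) ^ (c + 1)) hv
    refine ⟨σ, ?_⟩
    rw [rowTuples, Finset.mem_filter, Fintype.mem_piFinset]
    exact ⟨hw, fun i m m' hm => hσ i hm⟩
  · right
    push Not at hv
    obtain ⟨a, ha⟩ := hv
    obtain ⟨S, hS, hcard⟩ := Finset.exists_subset_card_eq (Nat.succ_le_of_lt ha)
    have hSa : ∀ i ∈ S, w i % (p:ℤ) ^ (c + 1) = a := fun i hi => (Finset.mem_filter.1 (hS hi)).2
    obtain ⟨i₀, hi₀⟩ : S.Nonempty := by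
      rw [← Finset.card_pos, hcard]; omega
    obtain ⟨q, hq⟩ := (hw i₀ |> mem_cls.1).2.symm.dvd
    refine ⟨S, Finset.mem_powersetCard.2 ⟨Finset.subset_univ _, hcard⟩, (q % p).toNat, ?_, ?_⟩
    · have := Int.emod_lt_of_pos q (show (0:ℤ) < p by exact_mod_cast hp)
      have := Int.emod_nonneg q hp0
      rw [Finset.mem_range]
      omega
    · rw [Fintype.mem_piFinset]
      intro i
      split_ifs with hi
      · refine mem_cls.2 ⟨(mem_cls.1 (hw i)).1, ?_⟩
        have h1 : Int.ModEq ((p:ℤ) ^ (c + 1)) (w i) (w i₀) := (hSa i hi).trans (hSa i₀ hi₀).symm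
        refine h1.trans ?_
        rw [Int.toNat_of_nonneg (Int.emod_nonneg q hp0)]
        have h2 : w i₀ = η + (p:ℤ) ^ c * q := by linarith
        rw [h2, pow_succ]
        exact Int.ModEq.add_left _ (Int.ModEq.mul_left' (Int.mod_modEq q p).symm)
      · exact hw i

theorem meanAvoid_eq_cnt (k p r t : ℕ) (X : ℝ) (c : ℕ) (η : ℤ) :
    meanAvoid k p r t X c η = cnt (pairFreq (tupFreq k) (tupFreq k))
      (avoidTuples p r X η ×ˢ Fintype.piFinset fun _ : Fin t × Fin r => cls X ((p:ℤ) ^ c) η)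
      (avoidTuples p r X η ×ˢ Fintype.piFinset fun _ : Fin t × Fin r => cls X ((p:ℤ) ^ c) η) := by
  rw [cnt_self_eq_integral, meanAvoid]
  congr 1
  funext α
  rw [trig_product, trig_piFinset, Finset.prod_const, Finset.card_univ, norm_mul, mul_pow,
    norm_pow, ← pow_mul, Fintype.card_prod, Fintype.card_fin, Fintype.card_fin, mul_comm 2]

theorem integrableOn_meanAvoid {ι : Type*} (Φ : ι → Fin k → ℤ) (A : Finset ι) (S : Finset ℤ)
    (n : ℕ) : IntegrableOn (fun α => ‖trig Φ A α‖ ^ 2 * ‖trig (powVec k) S α‖ ^ n) (box k) :=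
  integrableOn_box (((continuous_trig _ _).norm.pow _).mul ((continuous_trig _ _).norm.pow _))

/-- The contribution of the arrays with `t + 1` entries in a common class. -/
theorem sum_cnt_congruent_le {p r t c : ℕ} (hc : 1 ≤ c) {X : ℝ} {η : ℤ}
    {S : Finset (Fin t × Fin r)} (hS : S.card = t + 1) {B l : ℝ} (hl : 0 < l)
    (hB : ∀ m ∈ Finset.range p, meanAvoid k p r t X (c + 1) (η + (p:ℤ) ^ c * m) ≤ B) :
    ∑ m ∈ Finset.range p, (cnt (pairFreq (tupFreq k) (tupFreq k))
      (avoidTuples p r X η ×ˢ Fintype.piFinset fun i => if i ∈ S then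
        cls X ((p:ℤ) ^ (c + 1)) (η + (p:ℤ) ^ c * m) else cls X ((p:ℤ) ^ c) η)
      (avoidTuples p r X η ×ˢ Fintype.piFinset fun _ => cls X ((p:ℤ) ^ c) η) : ℝ) ≤
    p * l ^ (t + 1) * meanAvoid k p r t X c η +
      p * (1 / l) ^ (2 * (t * r) - (t + 1)) * B := by
  have hSle : t + 1 ≤ t * r := by
    rw [← hS]
    exact (Finset.card_le_univ S).trans (by simp)
  refine (sum_cnt_le_integral _ _ _ _).trans ?_
  set A : (Fin k → ℝ) → ℝ := fun α => ‖trig (tupFreq k) (avoidTuples p r X η) α‖ with hA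
  set g : (Fin k → ℝ) → ℝ := fun α => ‖trig (powVec k) (cls X ((p:ℤ) ^ c) η) α‖ with hg
  set h : ℕ → (Fin k → ℝ) → ℝ := fun m α =>
    ‖trig (powVec k) (cls X ((p:ℤ) ^ (c + 1)) (η + (p:ℤ) ^ c * m)) α‖ with hh
  have hI : ∀ m : ℕ, ∫ α in box k, A α ^ 2 * h m α ^ (2 * (t * r)) =
      meanAvoid k p r t X (c + 1) (η + (p:ℤ) ^ c * m) := by
    intro m
    have : avoidTuples p r X η = avoidTuples p r X (η + (p:ℤ) ^ c * m) := by
      refine avoidTuples_congr ?_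
      rw [Int.modEq_iff_dvd, add_sub_cancel_left]
      exact Dvd.dvd.mul_right (dvd_pow_self _ (by omega)) _
    simp only [hA, hh, meanAvoid, this]
  set E := (1 / l) ^ (2 * (t * r) - (t + 1)) with hE
  have hE0 : 0 ≤ E := by positivity
  have hi1 : ∀ m, IntegrableOn (fun α => A α ^ 2 * h m α ^ (2 * (t * r))) (box k) :=
    fun m => integrableOn_meanAvoid _ _ _ _
  have hi2 : IntegrableOn (fun α => A α ^ 2 * g α ^ (2 * (t * r))) (box k) :=
    integrableOn_meanAvoid _ _ _ _
  calc _ ≤ ∫ α in box k, ∑ m ∈ Finset.range p, (l ^ (t + 1) * (A α ^ 2 * g α ^ (2 * (t * r))) +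
        E * (A α ^ 2 * h m α ^ (2 * (t * r)))) := by
        refine setIntegral_mono ?_ ?_ fun α => ?_
        · exact integrableOn_box ((continuous_finsetSum _ fun _ _ => continuous_trig _ _).norm.mul
            (continuous_trig _ _).norm)
        · exact integrable_finsetSum _ fun m _ => (hi2.const_mul _).add ((hi1 m).const_mul _)
        · refine (mul_le_mul_of_nonneg_right (norm_sum_le _ _) (norm_nonneg _)).trans ?_
          rw [Finset.sum_mul]
          refine Finset.sum_le_sum fun m _ => ?_
          rw [trig_product, trig_product, trig_piFinset_ite, trig_piFinset, hS]
          simp only [Finset.prod_const, Finset.card_univ, Fintype.card_prod, Fintype.card_fin,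
            norm_mul, norm_pow]
          have hy := young_pow (norm_nonneg (trig (powVec k) (cls X ((p:ℤ) ^ c) η) α))
            (norm_nonneg (trig (powVec k) (cls X ((p:ℤ) ^ (c + 1)) (η + (p:ℤ) ^ c * m)) α)) hl
            (show t + 1 ≤ 2 * (t * r) by omega)
          have hy2 := mul_le_mul_of_nonneg_left hy (sq_nonneg (A α))
          rw [show 2 * (t * r) - (t + 1) = (t * r - (t + 1)) + t * r by omega, pow_add] at hy2
          rw [hE, show 2 * (t * r) - (t + 1) = (t * r - (t + 1)) + t * r by omega]
          calc _ = _ := ?_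
            _ ≤ _ := hy2
            _ = _ := ?_
          · ring
          · ring
    _ = ∑ m ∈ Finset.range p, (l ^ (t + 1) * meanAvoid k p r t X c η +
        E * meanAvoid k p r t X (c + 1) (η + (p:ℤ) ^ c * m)) := by
        rw [integral_finsetSum]
        · refine Finset.sum_congr rfl fun m _ => ?_
          rw [integral_add (hi2.const_mul _) ((hi1 m).const_mul _), integral_const_mul,
            integral_const_mul, hI]
          rfl
        · exact fun m _ => (hi2.const_mul _).add ((hi1 m).const_mul _)
    _ ≤ ∑ m ∈ Finset.range p, (l ^ (t + 1) * meanAvoid k p r t X c η + E * B) := by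
        refine Finset.sum_le_sum fun m hm => ?_
        have := hB m hm
        gcongr
    _ = _ := by
        rw [Finset.sum_const, Finset.card_range, nsmul_eq_mul]; ring

/-- Conditioning: the mean value at level `c` is controlled by the conditioned mean value at
level `c` and by the mean values at level `c + 1`. -/
theorem exists_meanAvoid_le (r : ℕ) {t : ℕ} (ht : 2 ≤ t) : ∃ C : ℝ, 1 ≤ C ∧
    ∀ (k p : ℕ) (X : ℝ) (c : ℕ) (η : ℤ) (B : ℝ), 0 < p → 1 ≤ c → 1 ≤ η → η ≤ (p:ℤ) ^ c → 0 ≤ B →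
      (∀ ξ : ℤ, 1 ≤ ξ → ξ ≤ (p:ℤ) ^ (c + 1) → meanAvoid k p r t X (c + 1) ξ ≤ B) →
      meanAvoid k p r t X c η ≤
        C * (Ktilde k p r t X c η + (p:ℝ) ^ (2 * ((r * t : ℕ) : ℝ) / 3) * B) := by
  set F : ℝ := (Fintype.card (Equiv.Perm (Fin t × Fin r)) : ℝ) ^ 2 with hF
  set 𝒮 := Finset.powersetCard (t + 1) (Finset.univ : Finset (Fin t × Fin r)) with h𝒮
  set P : ℝ := (𝒮.card : ℝ) with hP
  have hP0 : 0 ≤ P := Nat.cast_nonneg _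
  set ρ : ℝ := 1 / (4 * (P + 1)) with hρ
  have hρ0 : 0 < ρ := by positivity
  have hρ1 : ρ ≤ 1 := by
    rw [hρ, div_le_one (by positivity)]; linarith
  have hPρ : P * ρ ≤ 1 / 4 := by
    rw [hρ, mul_one_div, div_le_iff₀ (by positivity)]; linarith
  set D : ℝ := (1 / ρ) ^ (2 * (t * r) - (t + 1)) with hD
  have hD0 : 0 ≤ D := by positivity
  refine ⟨1 + 2 * F + 4 * P * D, ?_, ?_⟩
  · have : 0 ≤ F := by positivity
    have : 0 ≤ P * D := by positivity
    linarith
  intro k p X c η B hp hc hη1 hη2 hB0 hB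
  have hpR : (1:ℝ) ≤ p := by exact_mod_cast hp
  have hp0 : (0:ℝ) < p := by linarith
  set Q : ℝ := (p:ℝ) ^ (2 * ((r * t : ℕ) : ℝ) / 3) with hQ
  have hQ0 : 0 ≤ Q := by positivity
  set I := meanAvoid k p r t X c η with hI
  have hI0 : 0 ≤ I := meanAvoid_nonneg _ _ _ _ _ _ _
  set K := Ktilde k p r t X c η with hK
  have hK0 : 0 ≤ K := integral_nonneg fun α => by positivity
  set Φ := pairFreq (tupFreq k) (tupFreq k) (ι := Fin r → ℤ) (κ := Fin t × Fin r → ℤ) with hΦ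
  set A := avoidTuples p r X η with hA
  set W := Fintype.piFinset fun _ : Fin t × Fin r => cls X ((p:ℤ) ^ c) η with hW
  set V : Finset (Fin t × Fin r) → ℕ → Finset (Fin t × Fin r → ℤ) := fun S m =>
    Fintype.piFinset fun i => if i ∈ S then cls X ((p:ℤ) ^ (c + 1)) (η + (p:ℤ) ^ c * m)
      else cls X ((p:ℤ) ^ c) η with hV
  set G := A ×ˢ W.filter fun w => ∃ σ, w ∈ rowTuples p r t X c η σ with hG
  set H := A ×ˢ W.filter fun w => ∃ S ∈ 𝒮, ∃ m ∈ Finset.range p, w ∈ V S m with hH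
  have hsplit : cnt Φ (A ×ˢ W) (A ×ˢ W) ≤ cnt Φ G G + 2 * cnt Φ H (A ×ˢ W) := by
    refine cnt_self_le_of_cover _ _ _ _ fun a ha => ?_
    rw [Finset.mem_product] at ha
    rcases mem_rowTuples_or hp ha.2 with h | h
    · exact Or.inl (Finset.mem_product.2 ⟨ha.1, Finset.mem_filter.2 ⟨ha.2, h⟩⟩)
    · exact Or.inr (Finset.mem_product.2 ⟨ha.1, Finset.mem_filter.2 ⟨ha.2, h⟩⟩)
  have hGle : (cnt Φ G G : ℝ) ≤ F * K := by
    have := cnt_self_le_of_cover_eq Φ G Finset.univ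
      (fun σ => A ×ˢ rowTuples p r t X c η σ) ?_
      (fun α => ‖trig (tupFreq k) A α‖ * ‖trig (tupFreq k) (condTuples p r X c η) α‖ ^ t) ?_
    · rwa [← Ktilde_eq_integral hp, Finset.card_univ] at this
    · intro a ha
      obtain ⟨h1, h2⟩ := Finset.mem_product.1 ha
      obtain ⟨σ, hσ⟩ := (Finset.mem_filter.1 h2).2
      exact ⟨σ, Finset.mem_univ _, Finset.mem_product.2 ⟨h1, hσ⟩⟩
    · intro σ _ α
      rw [hΦ, trig_product, trig_rowTuples, norm_mul, norm_pow]
  have hHle : (cnt Φ H (A ×ˢ W) : ℝ) ≤ P * (ρ * I + D * Q * B) := by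
    have h1 : cnt Φ H (A ×ˢ W) ≤ ∑ S ∈ 𝒮, ∑ m ∈ Finset.range p, cnt Φ (A ×ˢ V S m) (A ×ˢ W) := by
      rw [← Finset.sum_product']
      refine cnt_le_sum_of_cover Φ H (A ×ˢ W) (𝒮 ×ˢ Finset.range p)
        (fun Sm => A ×ˢ V Sm.1 Sm.2) fun a ha => ?_
      obtain ⟨h1, h2⟩ := Finset.mem_product.1 ha
      obtain ⟨S, hS, m, hm, hmem⟩ := (Finset.mem_filter.1 h2).2
      exact ⟨(S, m), Finset.mem_product.2 ⟨hS, hm⟩, Finset.mem_product.2 ⟨h1, hmem⟩⟩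
    set l : ℝ := ρ * (p:ℝ) ^ (-(1 / ((t:ℝ) + 1))) with hl
    have hl0 : 0 < l := by positivity
    have ht1 : ((t:ℝ) + 1) ≠ 0 := by positivity
    have hlpow : p * l ^ (t + 1) ≤ ρ := by
      rw [hl, mul_pow, ← Real.rpow_natCast ((p:ℝ) ^ _), ← Real.rpow_mul hp0.le]
      have : (-(1 / ((t:ℝ) + 1))) * ((t + 1 : ℕ) : ℝ) = -1 := by
        push_cast; field_simp
      rw [this, Real.rpow_neg_one]
      have h3 : ρ ^ (t + 1) ≤ ρ := pow_le_of_le_one hρ0.le hρ1 (by omega)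
      calc _ = ρ ^ (t + 1) := by field_simp
        _ ≤ ρ := h3
    have h2 : ∀ S ∈ 𝒮, ∑ m ∈ Finset.range p, (cnt Φ (A ×ˢ V S m) (A ×ˢ W) : ℝ) ≤
        ρ * I + D * Q * B := by
      intro S hS
      have hcard : S.card = t + 1 := (Finset.mem_powersetCard.1 hS).2
      have hSle : t + 1 ≤ t * r := by
        rw [← hcard]
        exact (Finset.card_le_univ S).trans (by simp)
      refine (sum_cnt_congruent_le hc hcard (B := B) hl0 fun m hm => ?_).trans ?_
      · have hm' : (m:ℤ) + 1 ≤ p := by exact_mod_cast Finset.mem_range.1 hm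
        have hpc : (0:ℤ) ≤ (p:ℤ) ^ c := by positivity
        refine hB _ (le_add_of_le_of_nonneg hη1 (by positivity)) ?_
        calc η + (p:ℤ) ^ c * m ≤ (p:ℤ) ^ c + (p:ℤ) ^ c * m := by linarith
          _ = (p:ℤ) ^ c * (m + 1) := by ring
          _ ≤ (p:ℤ) ^ c * p := by gcongr
          _ = _ := by rw [pow_succ]
      · have h4 : p * (1 / l) ^ (2 * (t * r) - (t + 1)) ≤ D * Q := by
          have e1 : 1 / l = 1 / ρ * (p:ℝ) ^ (1 / ((t:ℝ) + 1)) := by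
            rw [hl, Real.rpow_neg hp0.le]; field_simp
          rw [e1, mul_pow, ← hD, ← Real.rpow_natCast ((p:ℝ) ^ _), ← Real.rpow_mul hp0.le]
          have e2 : (p:ℝ) * (p:ℝ) ^ (1 / ((t:ℝ) + 1) * ((2 * (t * r) - (t + 1) : ℕ) : ℝ)) ≤ Q := by
            rw [← Real.rpow_one_add' hp0.le (by positivity), hQ]
            refine Real.rpow_le_rpow_of_exponent_le hpR ?_
            rw [Nat.cast_sub (by omega)]
            push_cast
            have ht3 : (3:ℝ) ≤ t + 1 := by exact_mod_cast Nat.succ_le_succ ht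
            calc 1 + 1 / ((t:ℝ) + 1) * (2 * (t * r) - (t + 1)) = 2 * (r * t) / (t + 1) := by
                  field_simp; ring
              _ ≤ _ := by gcongr
          calc _ = D * ((p:ℝ) * (p:ℝ) ^ (1 / ((t:ℝ) + 1) *
                ((2 * (t * r) - (t + 1) : ℕ) : ℝ))) := by ring
            _ ≤ _ := by gcongr
        gcongr
    calc (cnt Φ H (A ×ˢ W) : ℝ) ≤ ∑ S ∈ 𝒮, ∑ m ∈ Finset.range p,
          (cnt Φ (A ×ˢ V S m) (A ×ˢ W) : ℝ) := by exact_mod_cast h1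
      _ ≤ ∑ S ∈ 𝒮, (ρ * I + D * Q * B) := Finset.sum_le_sum h2
      _ = _ := by rw [Finset.sum_const, nsmul_eq_mul]
  have hIc : I = (cnt Φ (A ×ˢ W) (A ×ˢ W) : ℝ) := meanAvoid_eq_cnt _ _ _ _ _ _ _
  have hsplit' : (cnt Φ (A ×ˢ W) (A ×ˢ W) : ℝ) ≤ cnt Φ G G + 2 * cnt Φ H (A ×ˢ W) := by
    exact_mod_cast hsplit
  rw [← hIc] at hsplit'
  have h6 : P * ρ * I ≤ 1 / 4 * I := by gcongr
  have h7 : I ≤ 2 * F * K + 4 * P * D * (Q * B) := by linarith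
  have hQB : 0 ≤ Q * B := by positivity
  have hF0 : 0 ≤ F := by positivity
  calc I ≤ 2 * F * K + 4 * P * D * (Q * B) := h7
    _ ≤ (1 + 2 * F + 4 * P * D) * K + (1 + 2 * F + 4 * P * D) * (Q * B) := by
      gcongr
      · have : 0 ≤ P * D := by positivity
        linarith
      · linarith
    _ = _ := by ring

theorem prod_le_sum_pow_card {ι : Type*} [Fintype ι] [Nonempty ι] {a : ι → ℝ} (ha : ∀ i, 0 ≤ a i) :
    ∏ i, a i ≤ ∑ i, a i ^ Fintype.card ι := by
  obtain ⟨j, hj⟩ := Finite.exists_max a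
  calc ∏ i, a i ≤ ∏ _i : ι, a j := Finset.prod_le_prod (fun i _ => ha i) fun i _ => hj i
    _ = a j ^ Fintype.card ι := by rw [Finset.prod_const, Finset.card_univ]
    _ ≤ _ := Finset.single_le_sum (f := fun i => a i ^ Fintype.card ι)
      (fun i _ => pow_nonneg (ha i) _) (Finset.mem_univ j)

/-- Pairs of tuples, the first with entries pairwise incongruent modulo `p` and incongruent to
the entries of the second. -/
def sepTuples (p r t : ℕ) (X : ℝ) : Finset ((Fin r → ℤ) × (Fin t × Fin r → ℤ)) :=
  ((Fintype.piFinset fun _ => allX X) ×ˢ (Fintype.piFinset fun _ => allX X)).filter fun xw =>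
    DistinctMod (p:ℤ) xw.1 ∧ ∀ i j, ¬ Int.ModEq (p:ℤ) (xw.1 i) (xw.2 j)

/-- The tuples incongruent to all entries of `v`, with entries pairwise incongruent. -/
def avoidAll (p r t : ℕ) (X : ℝ) (v : Fin t × Fin r → ℤ) : Finset (Fin r → ℤ) :=
  (Fintype.piFinset fun _ => allX X).filter fun x =>
    DistinctMod (p:ℤ) x ∧ ∀ i j, ¬ Int.ModEq (p:ℤ) (x i) (v j)

theorem trig_sepTuples {p : ℕ} (hp : 0 < p) (r t : ℕ) (X : ℝ) (α : Fin k → ℝ) :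
    trig (pairFreq (tupFreq k) (tupFreq k)) (sepTuples p r t X) α =
      ∑ v ∈ Fintype.piFinset fun _ => Finset.Icc (1:ℤ) p, trig (tupFreq k) (avoidAll p r t X v) α *
        trig (tupFreq k) (Fintype.piFinset fun j => cls X (p:ℤ) (v j)) α := by
  have hm : (0:ℤ) < (p:ℤ) := by exact_mod_cast hp
  rw [trig, ← Finset.sum_fiberwise_of_maps_to (g := fun xw j => oneRep p (xw.2 j))
    (t := Fintype.piFinset fun _ : Fin t × Fin r => Finset.Icc (1:ℤ) p)]
  · refine Finset.sum_congr rfl fun v hv => ?_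
    rw [← trig_product, trig]
    refine Finset.sum_congr ?_ fun _ _ => rfl
    rw [Fintype.mem_piFinset] at hv
    ext ⟨x, w⟩
    simp only [sepTuples, avoidAll, Finset.mem_filter, Finset.mem_product, Fintype.mem_piFinset,
      mem_cls, funext_iff]
    constructor
    · rintro ⟨⟨⟨h1, h2⟩, h3, h4⟩, h5⟩
      have h6 : ∀ j, Int.ModEq p (w j) (v j) := fun j => (oneRep_eq_iff (hv j)).1 (h5 j)
      exact ⟨⟨h1, h3, fun i j h => h4 i j (h.trans (h6 j).symm)⟩, fun j => ⟨h2 j, h6 j⟩⟩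
    · rintro ⟨⟨h1, h3, h4⟩, h5⟩
      exact ⟨⟨⟨h1, fun j => (h5 j).1⟩, h3, fun i j h => h4 i j (h.trans (h5 j).2)⟩,
        fun j => (oneRep_eq_iff (hv j)).2 (h5 j).2⟩
  · intro x _
    rw [Fintype.mem_piFinset]
    exact fun j => oneRep_mem hm _

/-- Splitting into residue classes modulo `p`. -/
theorem cnt_sepTuples_le {p r t : ℕ} (hp : 0 < p) (hr : 0 < r) (ht : 0 < t) {X B : ℝ}
    (hB : ∀ η : ℤ, 1 ≤ η → η ≤ p → meanAvoid k p r t X 1 η ≤ B) :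
    (cnt (pairFreq (tupFreq k) (tupFreq k)) (sepTuples p r t X) (sepTuples p r t X) : ℝ) ≤
      (t * r : ℕ) * (p:ℝ) ^ (2 * (t * r)) * B := by
  have hne : Nonempty (Fin t × Fin r) := ⟨(⟨0, ht⟩, ⟨0, hr⟩)⟩
  have hcι : Fintype.card (Fin t × Fin r) = t * r := by simp
  set R := Fintype.piFinset fun _ : Fin t × Fin r => Finset.Icc (1:ℤ) p with hR
  have hRc : (R.card : ℝ) = (p:ℝ) ^ (t * r) := by
    rw [hR, Fintype.card_piFinset, Finset.prod_const, Finset.card_univ, hcι]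
    simp
  set U : (Fin t × Fin r → ℤ) → (Fin t × Fin r) → (Fin k → ℝ) → ℝ := fun v j α =>
    ‖trig (tupFreq k) (avoidAll p r t X v) α‖ ^ 2 *
      ‖trig (powVec k) (cls X (p:ℤ) (v j)) α‖ ^ (2 * (t * r)) with hU
  have hUi : ∀ v j, IntegrableOn (U v j) (box k) := fun v j => integrableOn_meanAvoid _ _ _ _
  have hUle : ∀ v ∈ R, ∀ j, ∫ α in box k, U v j α ≤ B := by
    intro v hv j
    rw [hR, Fintype.mem_piFinset] at hv
    have hvj := Finset.mem_Icc.1 (hv j)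
    refine le_trans ?_ (hB (v j) hvj.1 hvj.2)
    have hsub : avoidAll p r t X v ⊆ avoidTuples p r X (v j) := by
      intro x hx
      simp only [avoidAll, avoidTuples, Finset.mem_filter] at hx ⊢
      exact ⟨hx.1, hx.2.1, fun i => hx.2.2 i j⟩
    have := integral_mono_subset (tupFreq k) (tupFreq k) hsub
      (Finset.Subset.refl (Fintype.piFinset fun _ : Fin t × Fin r => cls X (p:ℤ) (v j)))
    simp only [trig_piFinset, Finset.prod_const, Finset.card_univ, hcι, norm_pow, ← pow_mul,
      mul_comm (t * r) 2] at this
    simpa only [hU, meanAvoid, pow_one] using this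
  rw [cnt_self_eq_integral]
  calc _ ≤ ∫ α in box k, (p:ℝ) ^ (t * r) * ∑ v ∈ R, ∑ j, U v j α := by
        refine setIntegral_mono ?_ ?_ fun α => ?_
        · exact integrableOn_box ((continuous_trig _ _).norm.pow 2)
        · exact (integrable_finsetSum _ fun v _ => integrable_finsetSum _ fun j _ =>
            hUi v j).const_mul _
        · simp only [trig_sepTuples hp]
          refine (pow_le_pow_left₀ (norm_nonneg _) (norm_sum_le _ _) 2).trans ?_
          refine sq_sum_le_card_mul_sum_sq.trans ?_
          rw [← hR, hRc]
          gcongr with v hv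
          rw [norm_mul, mul_pow, hU, ← Finset.mul_sum]
          gcongr
          rw [trig_piFinset, norm_prod, ← Finset.prod_pow]
          refine (prod_le_sum_pow_card fun j => by positivity).trans (le_of_eq ?_)
          simp only [hcι, ← pow_mul]
    _ = (p:ℝ) ^ (t * r) * ∑ v ∈ R, ∑ j, ∫ α in box k, U v j α := by
        rw [integral_const_mul, integral_finsetSum]
        · congr 1
          refine Finset.sum_congr rfl fun v _ => ?_
          rw [integral_finsetSum]
          exact fun j _ => hUi v j
        · exact fun v _ => integrable_finsetSum _ fun j _ => hUi v j
    _ ≤ (p:ℝ) ^ (t * r) * ∑ v ∈ R, ∑ j : Fin t × Fin r, B := by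
        gcongr with v hv j
        exact hUle v hv j
    _ = _ := by
        rw [Finset.sum_const, Finset.sum_const, Finset.card_univ, hcι, nsmul_eq_mul, nsmul_eq_mul,
          hRc]
        ring

theorem card_primes_dvd_le {P : Finset ℕ} {M X : ℝ} {T : ℕ} (hM : 1 < M)
    (hP : ∀ p ∈ P, p.Prime ∧ M < p) (hX : X ≤ M ^ T) {d : ℤ} (hd : d ≠ 0) (hdX : (|d| : ℝ) ≤ X) :
    (P.filter fun p : ℕ => (p:ℤ) ∣ d).card ≤ T := by
  set Q := P.filter fun p : ℕ => (p:ℤ) ∣ d with hQ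
  have hdvd : ∏ p ∈ Q, p ∣ d.natAbs := by
    refine Finset.prod_primes_dvd _ (fun p hp => ?_) fun p hp => ?_
    · exact (hP p (Finset.mem_filter.1 hp).1).1.prime
    · exact Int.natCast_dvd.1 (Finset.mem_filter.1 hp).2
  have hle : ∏ p ∈ Q, p ≤ d.natAbs := Nat.le_of_dvd (Int.natAbs_pos.2 hd) hdvd
  have h1 : M ^ Q.card ≤ ((∏ p ∈ Q, p : ℕ) : ℝ) := by
    rw [Nat.cast_prod, ← Finset.prod_const]
    exact Finset.prod_le_prod (fun _ _ => by linarith)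
      fun p hp => (hP p (Finset.mem_filter.1 hp).1).2.le
  have h2 : ((∏ p ∈ Q, p : ℕ) : ℝ) ≤ |(d:ℝ)| := by
    rw [← Int.cast_abs, ← Int.natCast_natAbs]
    exact_mod_cast hle
  exact (pow_le_pow_iff_right₀ hM).1 (h1.trans (h2.trans (hdX.trans hX)))

theorem card_primes_not_distinctMod_le {ι : Type*} [Fintype ι] [DecidableEq ι] {P : Finset ℕ}
    {M X : ℝ} {T : ℕ} (hM : 1 < M) (hP : ∀ p ∈ P, p.Prime ∧ M < p) (hX : X ≤ M ^ T) {x : ι → ℤ}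
    (hx : x ∈ injTuples ι X) :
    (P.filter fun p : ℕ => ¬ DistinctMod (p:ℤ) x).card ≤ Fintype.card ι ^ 2 * T := by
  obtain ⟨hmem, hinj⟩ := Finset.mem_filter.1 hx
  rw [Fintype.mem_piFinset] at hmem
  have hsub : (P.filter fun p : ℕ => ¬ DistinctMod (p:ℤ) x) ⊆
      ((Finset.univ : Finset (ι × ι)).filter fun ij => ij.1 ≠ ij.2).biUnion
        fun ij => P.filter fun p : ℕ => (p:ℤ) ∣ x ij.2 - x ij.1 := by
    intro p hp
    obtain ⟨hpP, hnd⟩ := Finset.mem_filter.1 hp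
    unfold DistinctMod at hnd
    push Not at hnd
    obtain ⟨i, j, hmod, hij⟩ := hnd
    refine Finset.mem_biUnion.2 ⟨(i, j), Finset.mem_filter.2 ⟨Finset.mem_univ _, hij⟩, ?_⟩
    exact Finset.mem_filter.2 ⟨hpP, hmod.dvd⟩
  refine (Finset.card_le_card hsub).trans ((Finset.card_biUnion_le_card_mul _ _ T ?_).trans ?_)
  · rintro ⟨i, j⟩ hij
    have hij' : i ≠ j := (Finset.mem_filter.1 hij).2
    refine card_primes_dvd_le hM hP hX (sub_ne_zero.2 (hinj.ne hij'.symm)) ?_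
    have hi := Finset.mem_Icc.1 (hmem i)
    have hj := Finset.mem_Icc.1 (hmem j)
    have hi2 : (x i : ℝ) ≤ X := Int.le_floor.1 hi.2
    have hj2 : (x j : ℝ) ≤ X := Int.le_floor.1 hj.2
    have hi1 : (1:ℝ) ≤ x i := by exact_mod_cast hi.1
    have hj1 : (1:ℝ) ≤ x j := by exact_mod_cast hj.1
    push_cast
    rw [abs_le]
    constructor <;> linarith
  · gcongr
    refine (Finset.card_le_univ _).trans ?_
    rw [Fintype.card_prod, sq]

/-- Among many primes some prime separates the entries of half of all solutions. -/
theorem exists_prime_cnt_injTuples_le {ι : Type*} [Fintype ι] [DecidableEq ι] {P : Finset ℕ}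
    {M X : ℝ} {T : ℕ} (hM : 1 < M) (hP : ∀ p ∈ P, p.Prime ∧ M < p) (hX : X ≤ M ^ T)
    (hcard : 4 * (Fintype.card ι ^ 2 * T) ≤ P.card) (hne : P.Nonempty) :
    ∃ p ∈ P, cnt (tupFreq k) (injTuples ι X) (injTuples ι X) ≤
      2 * cnt (tupFreq k) ((injTuples ι X).filter fun x => DistinctMod (p:ℤ) x)
        ((injTuples ι X).filter fun x => DistinctMod (p:ℤ) x) := by
  set G := injTuples ι X with hG
  set S := (G ×ˢ G).filter fun ab => tupFreq k ab.1 = tupFreq k ab.2 with hS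
  set b := Fintype.card ι ^ 2 * T with hb
  have hbad : ∑ p ∈ P, (S.filter fun ab => ¬ (DistinctMod (p:ℤ) ab.1 ∧ DistinctMod (p:ℤ) ab.2)).card
      ≤ 2 * b * S.card := by
    simp only [Finset.card_filter]
    rw [Finset.sum_comm]
    simp only [← Finset.card_filter]
    calc _ ≤ ∑ ab ∈ S, 2 * b := by
          refine Finset.sum_le_sum fun ab hab => ?_
          obtain ⟨h1, h2⟩ := Finset.mem_product.1 (Finset.mem_filter.1 hab).1
          have hsub : (P.filter fun p : ℕ =>
              ¬ (DistinctMod (p:ℤ) ab.1 ∧ DistinctMod (p:ℤ) ab.2)) ⊆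
              (P.filter fun p : ℕ => ¬ DistinctMod (p:ℤ) ab.1) ∪
                P.filter fun p : ℕ => ¬ DistinctMod (p:ℤ) ab.2 := by
            intro p hp
            rw [Finset.mem_filter] at hp
            rw [Finset.mem_union, Finset.mem_filter, Finset.mem_filter]
            tauto
          have := (Finset.card_le_card hsub).trans (Finset.card_union_le _ _)
          have := card_primes_not_distinctMod_le hM hP hX h1
          have := card_primes_not_distinctMod_le hM hP hX h2
          omega
      _ = _ := by rw [Finset.sum_const, smul_eq_mul, mul_comm]
  by_contra! hcon
  have hgood : ∀ p ∈ P, S.card + 1 ≤ 2 * (S.filter fun ab =>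
      ¬ (DistinctMod (p:ℤ) ab.1 ∧ DistinctMod (p:ℤ) ab.2)).card := by
    intro p hp
    have h1 := hcon p hp
    have h2 := Finset.card_filter_add_card_filter_not (s := S)
      (fun ab => DistinctMod (p:ℤ) ab.1 ∧ DistinctMod (p:ℤ) ab.2)
    have h3 : cnt (tupFreq k) (G.filter fun x => DistinctMod (p:ℤ) x)
        (G.filter fun x => DistinctMod (p:ℤ) x) =
        (S.filter fun ab => DistinctMod (p:ℤ) ab.1 ∧ DistinctMod (p:ℤ) ab.2).card := by
      unfold cnt
      congr 1
      ext ab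
      simp only [hS, Finset.mem_filter, Finset.mem_product]
      tauto
    have h4 : cnt (tupFreq k) G G = S.card := rfl
    omega
  have h5 := Finset.sum_le_sum hgood
  rw [← Finset.mul_sum, Finset.sum_const, smul_eq_mul] at h5
  have h6 : 4 * b * S.card ≤ P.card * S.card := Nat.mul_le_mul_right _ hcard
  have h7 := hne.card_pos
  nlinarith

theorem cnt_distinctMod_le_sepTuples (p r t : ℕ) (X : ℝ) :
    cnt (tupFreq k) ((injTuples (Fin r ⊕ (Fin t × Fin r)) X).filter fun x => DistinctMod (p:ℤ) x)
      ((injTuples (Fin r ⊕ (Fin t × Fin r)) X).filter fun x => DistinctMod (p:ℤ) x) ≤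
    cnt (pairFreq (tupFreq k) (tupFreq k)) (sepTuples p r t X) (sepTuples p r t X) := by
  refine cnt_le_of_injOn _ _ _ _ (fun x => (x ∘ Sum.inl, x ∘ Sum.inr)) ?_ ?_ ?_
  · intro x hx
    simp only [injTuples, sepTuples, Finset.mem_filter, Fintype.mem_piFinset,
      Finset.mem_product] at hx ⊢
    obtain ⟨⟨h1, -⟩, h2⟩ := hx
    refine ⟨⟨fun i => h1 _, fun j => h1 _⟩, fun i j h => Sum.inl_injective (h2 _ _ h),
      fun i j h => ?_⟩
    exact absurd (h2 _ _ h) Sum.inl_ne_inr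
  · intro x _ y _ hxy
    simp only [Prod.mk.injEq] at hxy
    funext i
    rcases i with i | i
    · exact congrFun hxy.1 i
    · exact congrFun hxy.2 i
  · intro x _ y _ hxy
    simpa only [pairFreq, tupFreq, Fintype.sum_sum_type, Function.comp] using hxy

theorem sum_add_pow_eq_of_tupFreq_eq {ι : Type*} [Fintype ι] {x y : ι → ℤ}
    (h : tupFreq k x = tupFreq k y) (e : ℤ) {j : ℕ} (hj : j ≤ k) :
    ∑ i, (x i + e) ^ j = ∑ i, (y i + e) ^ j := by
  have hpow : ∀ l, l ≤ k → ∑ i, x i ^ l = ∑ i, y i ^ l := by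
    intro l hl
    rcases Nat.eq_zero_or_pos l with rfl | hl0
    · simp
    · have := congrFun h ⟨l - 1, by omega⟩
      simpa [tupFreq, powVec, Finset.sum_apply, Nat.sub_add_cancel hl0] using this
  simp only [add_pow]
  rw [Finset.sum_comm, Finset.sum_comm (s := Finset.univ)]
  refine Finset.sum_congr rfl fun l hl => ?_
  rw [Finset.mem_range] at hl
  rw [← Finset.sum_mul, ← Finset.sum_mul, ← Finset.sum_mul, ← Finset.sum_mul, hpow l (by omega)]

/-- Translation-dilation invariance for the solutions in a single residue class. -/
theorem integral_cls_le_Jcount {m : ℤ} (hm : 0 < m) {η : ℤ} (hη1 : 1 ≤ η) (hη2 : η ≤ m) {X Y : ℝ}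
    (hY : X / m + 1 ≤ Y) (u : ℕ) :
    ∫ α in box k, ‖trig (powVec k) (cls X m η) α‖ ^ (2 * u) ≤ Jcount u k Y := by
  have h1 := cnt_piFinset_const (k := k) (ι := Fin u) (cls X m η)
  rw [Fintype.card_fin] at h1
  rw [← h1, Jcount_eq_cnt, Nat.cast_le]
  have hmR : (0:ℝ) < m := by exact_mod_cast hm
  have key : ∀ z ∈ cls X m η, (z - η) / m * m = z - η := fun z hz =>
    Int.ediv_mul_cancel (mem_cls.1 hz).2.symm.dvd
  refine cnt_le_of_injOn _ _ _ _ (fun x i => (x i - η) / m + 1) ?_ ?_ ?_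
  · intro x hx
    rw [Fintype.mem_piFinset] at hx ⊢
    intro i
    have hk := key _ (hx i)
    have hxi := Finset.mem_Icc.1 (mem_cls.1 (hx i)).1
    rw [allX, Finset.mem_Icc]
    constructor
    · have : 0 ≤ (x i - η) / m := by
        by_contra hneg
        push Not at hneg
        have : (x i - η) / m * m ≤ -1 * m := by gcongr; omega
        omega
      omega
    · rw [Int.le_floor]
      refine le_trans ?_ hY
      push_cast
      have h3 : (((x i - η) / m : ℤ) : ℝ) * m = x i - η := by exact_mod_cast hk
      have h4 : (x i : ℝ) ≤ X := Int.le_floor.1 hxi.2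
      have h5 : (1:ℝ) ≤ η := by exact_mod_cast hη1
      gcongr
      rw [le_div_iff₀ hmR, h3]
      linarith
  · intro x hx y hy hxy
    rw [Finset.mem_coe, Fintype.mem_piFinset] at hx hy
    funext i
    have h2 : (x i - η) / m = (y i - η) / m := by simpa using congrFun hxy i
    have h3 := key _ (hx i)
    have h4 := key _ (hy i)
    rw [h2] at h3
    linarith
  · intro x hx y hy hxy
    rw [Fintype.mem_piFinset] at hx hy
    funext j
    simp only [tupFreq, powVec, Finset.sum_apply]
    have hpos : m ^ ((j:ℕ) + 1) ≠ 0 := (pow_pos hm _).ne'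
    apply mul_right_cancel₀ hpos
    rw [Finset.sum_mul, Finset.sum_mul]
    have e : ∀ z ∈ cls X m η, ((z - η) / m + 1) ^ ((j:ℕ) + 1) * m ^ ((j:ℕ) + 1) =
        (z + (m - η)) ^ ((j:ℕ) + 1) := by
      intro z hz
      rw [← mul_pow, add_mul, key z hz]
      ring
    rw [Finset.sum_congr rfl fun i _ => e _ (hx i), Finset.sum_congr rfl fun i _ => e _ (hy i)]
    exact sum_add_pow_eq_of_tupFreq_eq hxy _ j.2

theorem pow_le_Jcount (u k : ℕ) {X : ℝ} (hX : 2 ≤ X) : (X / 2) ^ u ≤ Jcount u k X := by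
  have h1 : (allX X).card ^ u ≤ Jcount u k X := by
    rw [Jcount_eq_cnt, cnt]
    calc (allX X).card ^ u = (Fintype.piFinset fun _ : Fin u => allX X).card := by
          rw [Fintype.card_piFinset, Finset.prod_const, Finset.card_univ, Fintype.card_fin]
      _ ≤ _ := Finset.card_le_card_of_injOn (fun x => (x, x)) (fun x hx => by simpa using hx)
          fun x _ y _ h => (Prod.mk.inj h).1
  have h2 : X / 2 ≤ (allX X).card := by
    have h3 : (0:ℤ) ≤ ⌊X⌋ := Int.floor_nonneg.2 (by linarith)
    have h4 : (((allX X).card : ℤ) : ℝ) = (⌊X⌋ : ℝ) := by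
      rw [allX, Int.card_Icc, add_sub_cancel_right, Int.toNat_of_nonneg h3]
    have h5 := Int.sub_one_lt_floor X
    rw [Int.cast_natCast] at h4
    linarith
  calc (X / 2) ^ u ≤ ((allX X).card : ℝ) ^ u := by gcongr
    _ ≤ _ := by exact_mod_cast h1

/-- The mean value at level `c` estimated trivially in terms of two Vinogradov mean values. -/
theorem meanAvoid_le_Jcount {p r t c : ℕ} (hp : 0 < p) {X Y l : ℝ} (hl : 0 < l) {η : ℤ}
    (hη1 : 1 ≤ η) (hη2 : η ≤ (p:ℤ) ^ c) (hY : X / (p:ℝ) ^ c + 1 ≤ Y) :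
    meanAvoid k p r t X c η ≤ l ^ (2 * (t * r)) * Jcount (r * (t + 1)) k X +
      (1 / l) ^ (2 * r) * Jcount (r * (t + 1)) k Y := by
  have hcι : Fintype.card (Fin t × Fin r) = t * r := by simp
  set g : (Fin k → ℝ) → ℝ := fun α => ‖trig (powVec k) (allX X) α‖ with hg
  set h : (Fin k → ℝ) → ℝ := fun α => ‖trig (powVec k) (cls X ((p:ℤ) ^ c) η) α‖ with hh
  have hgc : Continuous g := (continuous_trig _ _).norm
  have hhc : Continuous h := (continuous_trig _ _).norm
  have hi1 : IntegrableOn (fun α => g α ^ (2 * (r * (t + 1)))) (box k) :=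
    integrableOn_box (hgc.pow _)
  have hi2 : IntegrableOn (fun α => h α ^ (2 * (r * (t + 1)))) (box k) :=
    integrableOn_box (hhc.pow _)
  have h1 : meanAvoid k p r t X c η ≤ ∫ α in box k, g α ^ (2 * r) * h α ^ (2 * (t * r)) := by
    have hsub : avoidTuples p r X η ⊆ Fintype.piFinset fun _ : Fin r => allX X :=
      Finset.filter_subset _ _
    have := integral_mono_subset (tupFreq k) (tupFreq k) hsub (Finset.Subset.refl
      (Fintype.piFinset fun _ : Fin t × Fin r => cls X ((p:ℤ) ^ c) η))
    simp only [trig_piFinset, Finset.prod_const, Finset.card_univ, hcι, norm_pow, ← pow_mul,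
      mul_comm (t * r) 2, Fintype.card_fin, mul_comm r 2] at this
    exact this
  have h2 : ∫ α in box k, g α ^ (2 * r) * h α ^ (2 * (t * r)) ≤
      ∫ α in box k, (l ^ (2 * (t * r)) * g α ^ (2 * (r * (t + 1))) +
        (1 / l) ^ (2 * r) * h α ^ (2 * (r * (t + 1)))) := by
    refine setIntegral_mono ?_ ?_ fun α => ?_
    · exact integrableOn_box ((hgc.pow _).mul (hhc.pow _))
    · exact (hi1.const_mul _).add (hi2.const_mul _)
    · have e : 2 * (r * (t + 1)) = 2 * (t * r) + 2 * r := by ring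
      have := young_pow (norm_nonneg (trig (powVec k) (allX X) α))
        (norm_nonneg (trig (powVec k) (cls X ((p:ℤ) ^ c) η) α)) hl
        (show 2 * (t * r) ≤ 2 * (r * (t + 1)) by omega)
      rw [show 2 * (r * (t + 1)) - 2 * (t * r) = 2 * r by omega] at this
      rw [mul_comm]
      exact this
  have h3 : ∫ α in box k, h α ^ (2 * (r * (t + 1))) ≤ Jcount (r * (t + 1)) k Y := by
    refine integral_cls_le_Jcount (by positivity) hη1 hη2 ?_ _
    push_cast
    exact hY
  refine h1.trans (h2.trans ?_)
  rw [integral_add (hi1.const_mul _) (hi2.const_mul _), integral_const_mul, integral_const_mul,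
    ← Jcount_eq_integral]
  gcongr

theorem Ktilde_nonneg (k p r t : ℕ) (X : ℝ) (c : ℕ) (η : ℤ) : 0 ≤ Ktilde k p r t X c η :=
  integral_nonneg fun α => by positivity

theorem Ktilde_le_Kmax (k p r t : ℕ) (X : ℝ) (b : ℕ) {η : ℤ} (h1 : 1 ≤ η) (h2 : η ≤ (p:ℤ) ^ b) :
    Ktilde k p r t X b η ≤ Kmax k p r t X 0 b := by
  rw [Kmax, if_pos rfl]
  refine le_csSup (Set.Finite.bddAbove ?_) ⟨η, h1, h2, rfl⟩
  refine (((Finset.Icc (1:ℤ) ((p:ℤ) ^ b)).finite_toSet).image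
    fun η => Ktilde k p r t X b η).subset ?_
  rintro v ⟨η, h1, h2, rfl⟩
  exact ⟨η, by simp [h1, h2], rfl⟩

theorem Kmax_zero_nonneg {p : ℕ} (hp : 0 < p) (k r t : ℕ) (X : ℝ) (b : ℕ) :
    0 ≤ Kmax k p r t X 0 b := by
  have h : (1:ℤ) ≤ (p:ℤ) ^ b := by exact_mod_cast Nat.one_le_pow b p hp
  exact (Ktilde_nonneg k p r t X b 1).trans (Ktilde_le_Kmax k p r t X b le_rfl h)

/-- The conditioning process iterated four times. -/
theorem exists_cnt_sepTuples_le {r t : ℕ} (hr : 0 < r) (ht : 2 ≤ t) : ∃ A : ℝ, 1 ≤ A ∧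
    ∀ (k p : ℕ) (X B : ℝ), 0 < p → 0 ≤ B →
      (∀ ξ : ℤ, 1 ≤ ξ → ξ ≤ (p:ℤ) ^ 5 → meanAvoid k p r t X 5 ξ ≤ B) →
      (cnt (pairFreq (tupFreq k) (tupFreq k)) (sepTuples p r t X) (sepTuples p r t X) : ℝ) ≤
        A * (p:ℝ) ^ (2 * (t * r)) *
          (∑ h ∈ Finset.range 4, ((p:ℝ) ^ (2 * ((r * t : ℕ) : ℝ) / 3)) ^ h * Kmax k p r t X 0 (1 + h)
            + ((p:ℝ) ^ (2 * ((r * t : ℕ) : ℝ) / 3)) ^ 4 * B) := by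
  obtain ⟨C, hC1, hC⟩ := exists_meanAvoid_le r ht
  have hC0 : 0 ≤ C := by linarith
  have htr : 1 ≤ t * r := Nat.mul_pos (by omega) hr
  refine ⟨(t * r : ℕ) * C ^ 4, ?_, ?_⟩
  · have h1 : (1:ℝ) ≤ (t * r : ℕ) := by exact_mod_cast htr
    exact one_le_mul_of_one_le_of_one_le h1 (one_le_pow₀ hC1)
  intro k p X B hp hB0 hB
  set Q : ℝ := (p:ℝ) ^ (2 * ((r * t : ℕ) : ℝ) / 3) with hQ
  have hQ0 : 0 ≤ Q := by positivity
  set K : ℕ → ℝ := fun b => Kmax k p r t X 0 b with hK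
  have hK0 : ∀ b, 0 ≤ K b := fun b => Kmax_zero_nonneg hp k r t X b
  have step : ∀ (c : ℕ) (B' : ℝ), 1 ≤ c → 0 ≤ B' →
      (∀ ξ : ℤ, 1 ≤ ξ → ξ ≤ (p:ℤ) ^ (c + 1) → meanAvoid k p r t X (c + 1) ξ ≤ B') →
      ∀ ξ : ℤ, 1 ≤ ξ → ξ ≤ (p:ℤ) ^ c → meanAvoid k p r t X c ξ ≤ C * (K c + Q * B') := by
    intro c B' hc hB' h ξ h1 h2
    refine (hC k p X c ξ B' hp hc h1 h2 hB' h).trans ?_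
    have := Ktilde_le_Kmax k p r t X c h1 h2
    gcongr
  have hb4 : 0 ≤ C * (K 4 + Q * B) := by have := hK0 4; positivity
  have hb3 : 0 ≤ C * (K 3 + Q * (C * (K 4 + Q * B))) := by have := hK0 3; positivity
  have hb2 : 0 ≤ C * (K 2 + Q * (C * (K 3 + Q * (C * (K 4 + Q * B))))) := by
    have := hK0 2; positivity
  have s4 := step 4 B (by norm_num) hB0 hB
  have s3 := step 3 _ (by norm_num) hb4 s4
  have s2 := step 2 _ (by norm_num) hb3 s3
  have s1 := step 1 _ (by norm_num) hb2 s2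
  have hfin := cnt_sepTuples_le (k := k) hp hr (by omega) (X := X) (t := t)
    fun η h1 h2 => s1 η h1 (by simpa using h2)
  refine hfin.trans ?_
  have hmain : C * (K 1 + Q * (C * (K 2 + Q * (C * (K 3 + Q * (C * (K 4 + Q * B))))))) ≤
      C ^ 4 * (∑ h ∈ Finset.range 4, Q ^ h * K (1 + h) + Q ^ 4 * B) := by
    simp only [Finset.sum_range_succ, Finset.sum_range_zero, Nat.reduceAdd]
    have c1 : C ≤ C ^ 4 := le_self_pow₀ hC1 (by norm_num)
    have c2 : C ^ 2 ≤ C ^ 4 := pow_le_pow_right₀ hC1 (by norm_num)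
    have c3 : C ^ 3 ≤ C ^ 4 := pow_le_pow_right₀ hC1 (by norm_num)
    have k1 := mul_le_mul_of_nonneg_right c1 (hK0 1)
    have k2 := mul_le_mul_of_nonneg_right c2 (mul_nonneg hQ0 (hK0 2))
    have k3 := mul_le_mul_of_nonneg_right c3 (mul_nonneg (pow_nonneg hQ0 2) (hK0 3))
    linarith
  calc _ ≤ ((t * r : ℕ) : ℝ) * (p:ℝ) ^ (2 * (t * r)) *
        (C ^ 4 * (∑ h ∈ Finset.range 4, Q ^ h * K (1 + h) + Q ^ 4 * B)) := by gcongr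
    _ = _ := by ring

end

theorem thetaC_pos {t : ℕ} (ht : 2 ≤ t) (N : ℕ) : 0 < thetaC t N := by
  have : (0:ℝ) < t := by exact_mod_cast (by omega : 0 < t)
  unfold thetaC
  positivity

theorem thetaC_le {t : ℕ} (ht : 2 ≤ t) (N : ℕ) : thetaC t N ≤ 1 / 32 := by
  have h2 : (2:ℝ) ≤ t := by exact_mod_cast ht
  have h32 : (32:ℝ) ≤ 16 * t := by linarith
  unfold thetaC
  calc (16 * (t:ℝ)) ^ (-((N:ℝ) + 1)) ≤ (16 * (t:ℝ)) ^ (-1:ℝ) := by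
        refine Real.rpow_le_rpow_of_exponent_le (by linarith) ?_
        have : (0:ℝ) ≤ N := Nat.cast_nonneg N
        linarith
    _ = 1 / (16 * (t:ℝ)) := by rw [Real.rpow_neg_one, one_div]
    _ ≤ 1 / 32 := one_div_le_one_div_of_le (by norm_num) h32

theorem deltaC_le {t N : ℕ} (ht : 2 ≤ t) (hN : 1 ≤ N) : deltaC t N ≤ thetaC t N / 1000 := by
  have h1 : (1:ℝ) ≤ N := by exact_mod_cast hN
  have h2 : (1:ℝ) ≤ (t:ℝ) ^ N := one_le_pow₀ (by exact_mod_cast (by omega : 1 ≤ t))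
  unfold deltaC
  refine div_le_div_of_nonneg_left (thetaC_pos ht N).le (by norm_num) ?_
  nlinarith

/-- The diagonal solutions force any admissible exponent to be at least `u`. -/
theorem natCast_le_of_Jcount_lt_rpow {u k : ℕ} {Y₀ L : ℝ}
    (h : ∀ Y : ℝ, Y₀ ≤ Y → (Jcount u k Y : ℝ) < Y ^ L) : (u:ℝ) ≤ L := by
  by_contra hlt
  push Not at hlt
  have ht := tendsto_rpow_atTop (sub_pos.2 hlt)
  obtain ⟨Y, hY1, hY2, hY3⟩ := ((ht.eventually_ge_atTop ((2:ℝ) ^ u)).and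
    ((eventually_ge_atTop Y₀).and (eventually_ge_atTop 2))).exists
  have hY0 : 0 < Y := by linarith
  have h1 := (pow_le_Jcount u k hY3).trans_lt (h Y hY2)
  rw [Real.rpow_sub hY0, Real.rpow_natCast, le_div_iff₀ (Real.rpow_pos_of_pos hY0 L)] at hY1
  rw [div_pow, div_lt_iff₀ (by positivity)] at h1
  linarith

theorem rpow_mul_tail_le {u : ℕ} {M X L J J' p : ℝ} (hu : 1 ≤ u) (hM : 2 ≤ M) (hX : 0 < X)
    (hL : (u:ℝ) ≤ L) (hJ : 0 ≤ J) (hXJ : X ^ L ≤ M ^ ((1:ℝ) / 6) * J) (hp0 : 0 ≤ p)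
    (hp : p ≤ 2 * M) (hJ' : J' ≤ (2 * X / M ^ 5) ^ L) :
    p ^ (14 * (u:ℝ) / 3) * J' ≤ 2 ^ (6 * u) * M ^ (-((1:ℝ) / 6)) * J := by
  have hM0 : 0 < M := by linarith
  have hM1 : 1 ≤ M := by linarith
  have huR : (1:ℝ) ≤ u := by exact_mod_cast hu
  have hM5 : 2 / M ^ 5 ≤ 1 := by
    rw [div_le_one (by positivity)]
    calc (2:ℝ) ≤ M := hM
      _ ≤ M ^ 5 := le_self_pow₀ hM1 (by norm_num)
  have e1 : (2 * X / M ^ 5) ^ L = (2 / M ^ 5) ^ L * X ^ L := by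
    rw [← Real.mul_rpow (by positivity) hX.le]
    congr 1
    ring
  have e2 : (2 / M ^ 5) ^ L ≤ (2 / M ^ 5) ^ (u:ℝ) :=
    Real.rpow_le_rpow_of_exponent_ge (by positivity) hM5 hL
  have e3 : (2 / M ^ 5) ^ (u:ℝ) = (2:ℝ) ^ (u:ℝ) * M ^ (-(5 * (u:ℝ))) := by
    rw [Real.div_rpow (by norm_num) (by positivity), ← Real.rpow_natCast M 5,
      ← Real.rpow_mul hM0.le, Real.rpow_neg hM0.le, div_eq_mul_inv]
    norm_num
  have e4 : p ^ (14 * (u:ℝ) / 3) ≤ (2:ℝ) ^ (14 * (u:ℝ) / 3) * M ^ (14 * (u:ℝ) / 3) := by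
    rw [← Real.mul_rpow (by norm_num) hM0.le]
    exact Real.rpow_le_rpow hp0 hp (by positivity)
  calc p ^ (14 * (u:ℝ) / 3) * J'
      ≤ ((2:ℝ) ^ (14 * (u:ℝ) / 3) * M ^ (14 * (u:ℝ) / 3)) *
        (((2:ℝ) ^ (u:ℝ) * M ^ (-(5 * (u:ℝ)))) * (M ^ ((1:ℝ) / 6) * J)) := by
        refine mul_le_mul_of_nonneg e4 ?_ (by positivity) (by positivity)
        refine hJ'.trans ?_
        rw [e1]
        exact mul_le_mul (e2.trans e3.le) hXJ (by positivity) (by positivity)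
    _ = ((2:ℝ) ^ (14 * (u:ℝ) / 3 + u)) * M ^ (14 * (u:ℝ) / 3 + -(5 * (u:ℝ)) + 1 / 6) * J := by
        rw [Real.rpow_add (by norm_num), Real.rpow_add hM0, Real.rpow_add hM0]
        ring
    _ ≤ (2:ℝ) ^ ((6 * u : ℕ) : ℝ) * M ^ (-((1:ℝ) / 6)) * J := by
        gcongr
        · norm_num
        · push_cast; linarith
        · linarith
    _ = _ := by rw [Real.rpow_natCast]

/-- The choice of the parameter balancing the two terms of the trivial estimate. -/
theorem balance_tail {r t : ℕ} {p ε J J' : ℝ} (hp : 0 < p) (hε : 0 < ε) :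
    p ^ (2 * (t * r)) * ((p ^ (2 * ((r * t : ℕ) : ℝ) / 3)) ^ 4 *
      ((ε * p ^ (-(7:ℝ) / 3)) ^ (2 * (t * r)) * J +
        (1 / (ε * p ^ (-(7:ℝ) / 3))) ^ (2 * r) * J')) =
    ε ^ (2 * (t * r)) * J +
      (1 / ε) ^ (2 * r) * (p ^ (14 * ((r * (t + 1) : ℕ) : ℝ) / 3) * J') := by
  have e0 : 1 / (ε * p ^ (-(7:ℝ) / 3)) = 1 / ε * p ^ ((7:ℝ) / 3) := by
    rw [neg_div, Real.rpow_neg hp.le]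
    field_simp
  have e1 : p ^ (2 * (t * r)) * (p ^ (2 * ((r * t : ℕ) : ℝ) / 3)) ^ 4 *
      (p ^ (-(7:ℝ) / 3)) ^ (2 * (t * r)) = 1 := by
    rw [← Real.rpow_natCast p, ← Real.rpow_natCast (p ^ (2 * ((r * t : ℕ) : ℝ) / 3)),
      ← Real.rpow_natCast (p ^ (-(7:ℝ) / 3)), ← Real.rpow_mul hp.le, ← Real.rpow_mul hp.le,
      ← Real.rpow_add hp, ← Real.rpow_add hp, ← Real.rpow_zero p]
    congr 1
    push_cast
    ring
  have e2 : p ^ (2 * (t * r)) * (p ^ (2 * ((r * t : ℕ) : ℝ) / 3)) ^ 4 *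
      (p ^ ((7:ℝ) / 3)) ^ (2 * r) = p ^ (14 * ((r * (t + 1) : ℕ) : ℝ) / 3) := by
    rw [← Real.rpow_natCast p, ← Real.rpow_natCast (p ^ (2 * ((r * t : ℕ) : ℝ) / 3)),
      ← Real.rpow_natCast (p ^ ((7:ℝ) / 3)), ← Real.rpow_mul hp.le, ← Real.rpow_mul hp.le,
      ← Real.rpow_add hp, ← Real.rpow_add hp]
    congr 1
    push_cast
    ring
  rw [e0, mul_pow, mul_pow, ← e2]
  calc _ = ε ^ (2 * (t * r)) * J * (p ^ (2 * (t * r)) * (p ^ (2 * ((r * t : ℕ) : ℝ) / 3)) ^ 4 *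
      (p ^ (-(7:ℝ) / 3)) ^ (2 * (t * r))) + (1 / ε) ^ (2 * r) * ((p ^ (2 * (t * r)) *
      (p ^ (2 * ((r * t : ℕ) : ℝ) / 3)) ^ 4 * (p ^ ((7:ℝ) / 3)) ^ (2 * r)) * J') := by ring
    _ = _ := by rw [e1, mul_one]

theorem pow_mul_rpow_pow_le {r t h : ℕ} {p M : ℝ} (hp : 0 ≤ p) (hM : 0 ≤ M) (hpM : p ≤ 2 * M)
    (hh : h ≤ 3) : p ^ (2 * (t * r)) * (p ^ (2 * ((r * t : ℕ) : ℝ) / 3)) ^ h ≤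
      2 ^ (4 * (r * t)) * M ^ (2 * ((r * t : ℕ) : ℝ) + 2 * ((r * t : ℕ) : ℝ) * (h:ℝ) / 3) := by
  have hh3 : (h:ℝ) ≤ 3 := by exact_mod_cast hh
  rw [mul_comm t r]
  generalize r * t = s
  have hs : (0:ℝ) ≤ s := Nat.cast_nonneg s
  calc p ^ (2 * s) * (p ^ (2 * (s:ℝ) / 3)) ^ h = p ^ (2 * (s:ℝ) + 2 * (s:ℝ) * (h:ℝ) / 3) := by
        rw [← Real.rpow_natCast p (2 * s), ← Real.rpow_natCast (p ^ (2 * (s:ℝ) / 3)),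
          ← Real.rpow_mul hp, ← Real.rpow_add_of_nonneg hp (by positivity) (by positivity)]
        congr 1
        push_cast
        ring
    _ ≤ (2 * M) ^ (2 * (s:ℝ) + 2 * (s:ℝ) * (h:ℝ) / 3) := Real.rpow_le_rpow hp hpM (by positivity)
    _ = 2 ^ (2 * (s:ℝ) + 2 * (s:ℝ) * (h:ℝ) / 3) * M ^ (2 * (s:ℝ) + 2 * (s:ℝ) * (h:ℝ) / 3) :=
        Real.mul_rpow (by norm_num) hM
    _ ≤ 2 ^ ((4 * s : ℕ) : ℝ) * M ^ (2 * (s:ℝ) + 2 * (s:ℝ) * (h:ℝ) / 3) := by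
        gcongr
        · norm_num
        · push_cast
          nlinarith
    _ = _ := by rw [Real.rpow_natCast]

theorem exists_mul_ge_of_le_sum {n : ℕ} {a : ℝ} {f : ℕ → ℝ} (hn : 0 < n)
    (h : a ≤ ∑ i ∈ Finset.range n, f i) : ∃ i < n, a ≤ n * f i := by
  by_contra! hcon
  have hs : ∑ i ∈ Finset.range n, (n:ℝ) * f i < ∑ i ∈ Finset.range n, a :=
    Finset.sum_lt_sum_of_nonempty (by simpa using hn.ne') fun i hi =>
      hcon i (Finset.mem_range.1 hi)
  rw [← Finset.mul_sum, Finset.sum_const, Finset.card_range, nsmul_eq_mul] at hs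
  have : (0:ℝ) < n := by exact_mod_cast hn
  have := lt_of_mul_lt_mul_left hs this.le
  linarith

/-- Primes in `(M, 2M]` for large `M`. -/
theorem exists_primes_Ioc_real (n : ℕ) : ∃ M₀ : ℝ, ∀ M : ℝ, M₀ ≤ M →
    ∃ P : Finset ℕ, n ≤ P.card ∧ ∀ p ∈ P, p.Prime ∧ M < p ∧ (p:ℝ) ≤ 2 * M := by
  obtain ⟨n₀, hn₀⟩ := exists_le_card_primes_Ioc n
  refine ⟨n₀, fun M hM => ?_⟩
  have hM0 : 0 ≤ M := (Nat.cast_nonneg n₀).trans hM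
  refine ⟨_, hn₀ ⌊M⌋₊ (Nat.le_floor hM), fun p hp => ?_⟩
  obtain ⟨h1, h2⟩ := Finset.mem_filter.1 hp
  rw [Finset.mem_Ioc] at h1
  refine ⟨h2, (Nat.floor_lt hM0).1 h1.1, ?_⟩
  calc (p:ℝ) ≤ ((2 * ⌊M⌋₊ : ℕ) : ℝ) := by exact_mod_cast h1.2
    _ = 2 * (⌊M⌋₊ : ℝ) := by push_cast; ring
    _ ≤ 2 * M := by gcongr; exact Nat.floor_le hM0

/-- Lemma 6.1 (the pre-congruencing step): if J_{s+r}(X) > X^{λ-δ}, then there exist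
a prime M < p ≤ 2M and h ∈ {0,1,2,3} with
J_{s+r}(X) ≤ C M^{2s+2sh/3} K_{0,1+h}(X). -/
theorem lemma6_1 (k r t : ℕ) (hk : 2 ≤ k)
    (ht1 : max 2 (((k : ℝ) - 1) / 2) ≤ (t : ℝ)) (ht2 : t ≤ k)
    (hr1 : 1 ≤ r) (hr2 : r ≤ k) (hrt : k ≤ r + t) :
    ∃ N₀ : ℕ, ∀ N : ℕ, N₀ ≤ N →
    ∃ C : ℝ, 0 < C ∧ ∃ X₀ : ℝ, ∀ X : ℝ, X₀ ≤ X →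
    (∀ Y : ℝ, X ^ ((1:ℝ)/2) ≤ Y →
        (Jcount (r*(t+1)) k Y : ℝ) < Y ^ (lamExp k (r*(t+1)) + deltaC t N)) →
    X ^ (lamExp k (r*(t+1)) - deltaC t N) < (Jcount (r*(t+1)) k X : ℝ) →
    ∃ p : ℕ, p.Prime ∧ Mval t N X < (p:ℝ) ∧ (p:ℝ) ≤ 2 * Mval t N X ∧
    ∃ h : ℕ, h ≤ 3 ∧
      (Jcount (r*(t+1)) k X : ℝ) ≤
        C * Mval t N X ^ (2*((r*t : ℕ):ℝ) + 2*((r*t : ℕ):ℝ)*(h:ℝ)/3)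
          * Kmax k p r t X 0 (1+h) := by
  have ht : 2 ≤ t := by
    have : (2:ℝ) ≤ t := (le_max_left _ _).trans ht1
    exact_mod_cast this
  refine ⟨1, fun N hN => ?_⟩
  set θ := thetaC t N with hθ
  set δ := deltaC t N with hδ
  set L := lamExp k (r * (t + 1)) with hL
  set u := r * (t + 1) with hu
  set s := r * t with hs
  have hθ0 : 0 < θ := thetaC_pos ht N
  have hθ32 : θ ≤ 1 / 32 := thetaC_le ht N
  have hδθ : δ ≤ θ / 1000 := deltaC_le ht hN
  have hu1 : 1 ≤ u := Nat.mul_pos hr1 (by omega)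
  have hcι : Fintype.card (Fin r ⊕ (Fin t × Fin r)) = u := by
    simp only [Fintype.card_sum, Fintype.card_prod, Fintype.card_fin, hu]; ring
  obtain ⟨A, hA1, hA⟩ := exists_cnt_sepTuples_le hr1 ht
  obtain ⟨C₁, hC₁0, hC₁⟩ := exists_Jcount_le_injTuples (Fin r ⊕ (Fin t × Fin r)) k
  set T := ⌈1 / θ⌉₊ with hT
  obtain ⟨M₀, hM₀⟩ := exists_primes_Ioc_real (4 * (u ^ 2 * T) + 1)
  set ε : ℝ := 1 / (16 * A) with hε
  have hA0 : 0 < A := by linarith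
  have hε0 : 0 < ε := by positivity
  have hε1 : ε ≤ 1 := by
    rw [hε, div_le_one (by positivity)]; linarith
  set D : ℝ := 4 * A * ((1 / ε) ^ (2 * r) * 2 ^ (6 * u)) with hD
  have hD0 : 0 < D := by positivity
  have hMtend : Tendsto (fun X : ℝ => Mval t N X) atTop atTop := tendsto_rpow_atTop hθ0
  have hsmall : Tendsto (fun X : ℝ => Mval t N X ^ (-((1:ℝ) / 6))) atTop (nhds 0) :=
    (tendsto_rpow_neg_atTop (by norm_num : (0:ℝ) < 1 / 6)).comp hMtend
  have hev : ∀ᶠ X : ℝ in atTop, 2 ≤ Mval t N X ∧ M₀ ≤ Mval t N X ∧ 2 ≤ X ∧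
      2 * (4 * C₁ + 1) ≤ X ∧ Mval t N X ^ (-((1:ℝ) / 6)) ≤ 1 / (4 * D) :=
    (hMtend.eventually_ge_atTop 2).and ((hMtend.eventually_ge_atTop M₀).and
      ((eventually_ge_atTop 2).and ((eventually_ge_atTop _).and
        (hsmall.eventually_le_const (by positivity)))))
  obtain ⟨X₀, hX₀⟩ := eventually_atTop.1 hev
  refine ⟨64 * A * 2 ^ (4 * s), by positivity, X₀, fun X hX hJupper hJlower => ?_⟩
  obtain ⟨hM2, hMM₀, hX2, hXC, hMsmall⟩ := hX₀ X hX
  set M := Mval t N X with hM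
  have hMX : M = X ^ θ := rfl
  have hX0 : 0 < X := by linarith
  have hX1 : 1 ≤ X := by linarith
  have hM0 : 0 < M := by linarith
  set J : ℝ := (Jcount u k X : ℝ) with hJ
  have hJ0 : 0 ≤ J := Nat.cast_nonneg _
  have hC₁J : C₁ ≤ J / 4 := by
    have h1 := pow_le_Jcount u k hX2
    have h2 : X / 2 ≤ (X / 2) ^ u := le_self_pow₀ (by linarith) (by omega)
    linarith
  obtain ⟨P, hPcard, hP⟩ := hM₀ M hMM₀
  have hXT : X ≤ M ^ T := by
    rw [hMX, ← Real.rpow_natCast, ← Real.rpow_mul hX0.le]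
    refine Real.self_le_rpow_of_one_le hX1 ?_
    have := Nat.le_ceil (1 / θ)
    calc 1 = θ * (1 / θ) := by field_simp
      _ ≤ θ * T := by gcongr
  obtain ⟨p, hpP, hpcnt⟩ := exists_prime_cnt_injTuples_le (k := k)
    (ι := Fin r ⊕ (Fin t × Fin r)) (P := P) (X := X) (T := T) (show 1 < M by linarith)
    (fun p hp => ⟨(hP p hp).1, (hP p hp).2.1⟩) hXT (by rw [hcι]; omega)
    (Finset.card_pos.1 (by omega))
  obtain ⟨hpprime, hpM, hp2M⟩ := hP p hpP
  refine ⟨p, hpprime, hpM, hp2M, ?_⟩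
  have hp0 : 0 < p := hpprime.pos
  have hpR : (0:ℝ) < p := by exact_mod_cast hp0
  set Y : ℝ := 2 * X / M ^ 5 with hY
  have hM5 : M ^ 5 ≤ X ^ ((1:ℝ) / 2) := by
    rw [hMX, ← Real.rpow_natCast, ← Real.rpow_mul hX0.le]
    refine Real.rpow_le_rpow_of_exponent_le hX1 ?_
    push_cast
    linarith
  have hhalf : X ^ ((1:ℝ) / 2) * X ^ ((1:ℝ) / 2) = X := by
    rw [← Real.rpow_add hX0]; norm_num
  have hhalf1 : 1 ≤ X ^ ((1:ℝ) / 2) := Real.one_le_rpow hX1 (by norm_num)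
  have hXM : X ^ ((1:ℝ) / 2) ≤ X / M ^ 5 := by
    rw [le_div_iff₀ (by positivity)]
    nlinarith
  have hYX : X ^ ((1:ℝ) / 2) ≤ Y := by
    rw [hY, mul_div_assoc]; linarith
  have hYp : X / (p:ℝ) ^ 5 + 1 ≤ Y := by
    have : X / (p:ℝ) ^ 5 ≤ X / M ^ 5 := by gcongr
    rw [hY, mul_div_assoc]
    linarith
  have hLu : (u:ℝ) ≤ L + δ := natCast_le_of_Jcount_lt_rpow hJupper
  have hXJ : X ^ (L + δ) ≤ M ^ ((1:ℝ) / 6) * J := by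
    have e : L + δ = 2 * δ + (L - δ) := by ring
    rw [e, Real.rpow_add hX0, hMX, ← Real.rpow_mul hX0.le]
    refine mul_le_mul (Real.rpow_le_rpow_of_exponent_le hX1 (by linarith)) hJlower.le
      (by positivity) (by positivity)
  set J' : ℝ := (Jcount u k Y : ℝ) with hJ'
  have hJ'0 : 0 ≤ J' := Nat.cast_nonneg _
  have htail := rpow_mul_tail_le hu1 hM2 hX0 hLu hJ0 hXJ hpR.le hp2M (hJupper Y hYX).le
  set l : ℝ := ε * (p:ℝ) ^ (-(7:ℝ) / 3) with hl
  have hl0 : 0 < l := by positivity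
  set B : ℝ := l ^ (2 * (t * r)) * J + (1 / l) ^ (2 * r) * J' with hB
  have hcond := hA k p X B hp0 (by positivity) fun ξ h1 h2 =>
    meanAvoid_le_Jcount hp0 hl0 h1 h2 hYp
  have hJle := hC₁ X
  rw [hcι] at hJle
  have hchain : J ≤ 4 * (cnt (pairFreq (tupFreq k) (tupFreq k)) (sepTuples p r t X)
      (sepTuples p r t X) : ℝ) + C₁ := by
    have h1 : (cnt (tupFreq k) (injTuples (Fin r ⊕ (Fin t × Fin r)) X)
        (injTuples (Fin r ⊕ (Fin t × Fin r)) X) : ℝ) ≤ 2 * (cnt (pairFreq (tupFreq k) (tupFreq k))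
        (sepTuples p r t X) (sepTuples p r t X) : ℝ) := by
      exact_mod_cast hpcnt.trans (Nat.mul_le_mul_left 2 (cnt_distinctMod_le_sepTuples p r t X))
    linarith
  set Q : ℝ := (p:ℝ) ^ (2 * (s:ℝ) / 3) with hQ
  have hbal : (p:ℝ) ^ (2 * (t * r)) * (Q ^ 4 * B) ≤ J / (16 * A) + J / (16 * A) := by
    rw [hQ, hB, hl, hs, balance_tail hpR hε0]
    refine add_le_add ?_ ?_
    · have : ε ^ (2 * (t * r)) ≤ ε :=
        pow_le_of_le_one hε0.le hε1 (by have : 0 < t * r := Nat.mul_pos (by omega) hr1; omega)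
      calc _ ≤ ε * J := by gcongr
        _ = _ := by rw [hε]; ring
    · calc _ ≤ (1 / ε) ^ (2 * r) * (2 ^ (6 * u) * M ^ (-((1:ℝ) / 6)) * J) := by gcongr
        _ = D / (4 * A) * M ^ (-((1:ℝ) / 6)) * J := by rw [hD]; field_simp
        _ ≤ D / (4 * A) * (1 / (4 * D)) * J := by gcongr
        _ = _ := by field_simp; ring
  set K : ℕ → ℝ := fun h => Kmax k p r t X 0 (1 + h) with hK
  have hsum : J / 4 ≤ ∑ h ∈ Finset.range 4, 4 * A * ((p:ℝ) ^ (2 * (t * r)) * (Q ^ h * K h)) := by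
    rw [← Finset.mul_sum, ← Finset.mul_sum]
    have h1 : 4 * A * ((p:ℝ) ^ (2 * (t * r)) * (Q ^ 4 * B)) ≤ J / 2 := by
      calc _ ≤ 4 * A * (J / (16 * A) + J / (16 * A)) := by gcongr
        _ = _ := by field_simp; ring
    have h2 : A * (p:ℝ) ^ (2 * (t * r)) * (∑ h ∈ Finset.range 4, Q ^ h * K h + Q ^ 4 * B) =
        A * ((p:ℝ) ^ (2 * (t * r)) * ∑ h ∈ Finset.range 4, Q ^ h * K h) +
          A * ((p:ℝ) ^ (2 * (t * r)) * (Q ^ 4 * B)) := by ring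
    rw [h2] at hcond
    linarith
  obtain ⟨h, hh4, hh⟩ := exists_mul_ge_of_le_sum (by norm_num) hsum
  refine ⟨h, by omega, ?_⟩
  have hK0 : 0 ≤ K h := Kmax_zero_nonneg hp0 k r t X (1 + h)
  have hpow := pow_mul_rpow_pow_le (r := r) (t := t) hpR.le hM0.le hp2M (by omega : h ≤ 3)
  push_cast at hh
  calc J ≤ 64 * A * ((p:ℝ) ^ (2 * (t * r)) * Q ^ h * K h) := by linarith
    _ ≤ 64 * A * (2 ^ (4 * s) * M ^ (2 * (s:ℝ) + 2 * (s:ℝ) * (h:ℝ) / 3) * K h) := by gcongr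
    _ = _ := by ring

end
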